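/- arXiv:1309.5712 — 5 statements merged into one kernel-verified Lean document; each statement's English description precedes it below -/
import Mathlib

section
/- Let A be a finite set of integers with |A| = k > 2. If |A+A| = 2k-1+b with 2k-1+b ≤ 3k-4, then A is contained in an arithmetic progression of length k+b ≤ 2k-3. -/
open Pointwise

/-!
Rescale so that the differences of the set `A` of `k` integers have gcd one. Let `lo < hi` be its
extremes and reduce `A + A` modulo `n = hi - lo`. Each element of `A` other than `hi` accounts for
two sums in the same class, so `#(A + A)` is at least `k` plus the number of residues hit. A missed
residue `w` forces, by pigeonhole, `A` to be sparse on both sides of `w`. Follow the walk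
`x ↦ 2 * #(A ∩ (-∞, x]) - x`, which steps up at the elements of `A` and down elsewhere. At the
missed residues it takes at most `n - 2 * k + 3` values, and if it takes one of them twice, it steps
up in between, at an element `c` of `A` on both sides of which `A` is still sparse. So either at
least `min n (2 * k - 3)` residues are hit, or `A` can be cut at such a `c`.

In the latter case, both halves `P ≤ c ≤ Q` are dealt with by induction. Their sumsets share only
`2 * c`, and it remains to find one sum that belongs to neither of them. If `c + 1 ∈ A`, it is
gained by adding `c + 1` to `P`. A half that lies in a proper residue class, to which induction does
not apply, is compensated by the many mixed sums that leave this class.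
-/

namespace Freiman

open Finset

section General

variable {α : Type*}

lemma isGreatest_filter_le [Preorder α] [DecidableLE α] {s : Finset α} {c : α} (hc : c ∈ s) :
    IsGreatest (({a ∈ s | a ≤ c} : Finset α) : Set α) c :=
  ⟨mem_filter.2 ⟨hc, le_rfl⟩, fun _ ha ↦ (mem_filter.1 ha).2⟩

lemma isLeast_filter_ge [Preorder α] [DecidableLE α] {s : Finset α} {c : α} (hc : c ∈ s) :
    IsLeast (({a ∈ s | c ≤ a} : Finset α) : Set α) c :=
  ⟨mem_filter.2 ⟨hc, le_rfl⟩, fun _ ha ↦ (mem_filter.1 ha).2⟩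

lemma card_filter_le_add_card_filter_ge [LinearOrder α] (s : Finset α) (c : α) :
    #{a ∈ s | a ≤ c} + #{a ∈ s | c ≤ a} = #s + if c ∈ s then 1 else 0 := by
  rw [← card_union_add_card_inter, ← filter_or, ← filter_and,
    filter_true_of_mem fun a _ ↦ le_total a c, ← card_singleton c, ← card_empty (α := α)]
  simp only [← le_antisymm_iff, filter_eq', apply_ite card]

lemma card_union_add_one [PartialOrder α] [DecidableEq α] {s t : Finset α} {c : α}
    (hs : IsGreatest (s : Set α) c) (ht : IsLeast (t : Set α) c) : #(s ∪ t) + 1 = #s + #t := by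
  have hinter : s ∩ t = {c} := by
    ext z
    rw [mem_inter, mem_singleton]
    refine ⟨fun hz ↦ le_antisymm (hs.2 hz.1) (ht.2 hz.2), ?_⟩
    rintro rfl
    exact ⟨hs.1, ht.1⟩
  rw [← card_union_add_card_inter, hinter, card_singleton]

lemma two_mul_card_le_card_add_self_add_one [LinearOrder α] [Add α] [IsCancelAdd α]
    [AddLeftMono α] [AddRightMono α] {s : Finset α} (hs : s.Nonempty) : 2 * #s ≤ #(s + s) + 1 := by
  have := cauchy_davenport_add_of_linearOrder_isCancelAdd hs hs
  omega

lemma card_add_self_add_card_add_self_le [AddCommMonoid α] [PartialOrder α] [IsOrderedAddMonoid α]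
    [LocallyFiniteOrder α] [DecidableEq α] {s t : Finset α} {c d : α}
    (hs : d ∈ upperBounds (s : Set α)) (ht : c ∈ lowerBounds (t : Set α)) :
    #(s + s) + #(t + t) ≤ #((s + s) ∪ (t + t)) + #(Icc (c + c) (d + d)) := by
  have hinter : (s + s) ∩ (t + t) ⊆ Icc (c + c) (d + d) := by
    intro z hz
    obtain ⟨hzs, hzt⟩ := mem_inter.1 hz
    obtain ⟨x, hx, x', hx', rfl⟩ := mem_add.1 hzs
    obtain ⟨y, hy, y', hy', hsum⟩ := mem_add.1 hzt
    exact mem_Icc.2 ⟨hsum ▸ add_le_add (ht hy) (ht hy'), add_le_add (hs hx) (hs hx')⟩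
  rw [← card_union_add_card_inter]
  exact Nat.add_le_add_left (card_le_card hinter) _

lemma add_mem_add_self_of_card_Icc_lt [AddCommGroup α] [PartialOrder α] [IsOrderedAddMonoid α]
    [LocallyFiniteOrder α] [DecidableEq α] {s : Finset α} {a b : α} (hs : s ⊆ Icc a b)
    (hcard : #(Icc a b) < 2 * #s) : a + b ∈ s + s := by
  have hreflect : s.image (a + b - ·) ⊆ Icc a b := by
    refine image_subset_iff.2 fun x hx ↦ ?_
    obtain ⟨hax, hxb⟩ := mem_Icc.1 (hs hx)
    exact mem_Icc.2 ⟨le_sub_iff_add_le.2 (by gcongr), sub_le_iff_le_add'.2 (by gcongr)⟩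
  obtain ⟨z, hz⟩ := inter_nonempty_of_card_lt_card_add_card hs hreflect (by
    rwa [card_image_of_injective _ sub_right_injective, ← two_mul])
  obtain ⟨hzs, hz⟩ := mem_inter.1 hz
  obtain ⟨x, hx, rfl⟩ := mem_image.1 hz
  exact mem_add.2 ⟨x, hx, _, hzs, add_sub_cancel x (a + b)⟩

lemma injective_add_mul {R : Type*} [Ring R] [NoZeroDivisors R] (a : R) {d : R} (hd : d ≠ 0) :
    Function.Injective fun x ↦ a + d * x :=
  (add_right_injective a).comp (mul_right_injective₀ hd)

lemma card_image_add_mul_add_self {R : Type*} [CommRing R] [NoZeroDivisors R] [DecidableEq R]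
    (a : R) {d : R} (hd : d ≠ 0) (s : Finset R) :
    #(s.image (fun x ↦ a + d * x) + s.image (fun x ↦ a + d * x)) = #(s + s) := by
  rw [← card_image_of_injective (s + s) (injective_add_mul (a + a) hd)]
  congr 1
  exact (image_image₂_distrib fun x y ↦ by ring).symm

end General

section Walk

/-- The walk of a set `A` of integers, which goes one step up at each element of `A` and one step
down at each other integer. It measures the density of the initial segments of `A`. -/
def walk (A : Finset ℤ) (x : ℤ) : ℤ :=
  2 * #{a ∈ A | a ≤ x} - x

variable {A : Finset ℤ} {v w x lo hi : ℤ}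

lemma walk_of_mem (hx : x ∈ A) : walk A x = walk A (x - 1) + 1 := by
  have hfilter : {a ∈ A | a ≤ x} = insert x {a ∈ A | a ≤ x - 1} := by grind
  have hnotMem : x ∉ {a ∈ A | a ≤ x - 1} := by simp
  rw [walk, walk, hfilter, card_insert_of_notMem hnotMem]
  push_cast
  ring

lemma walk_of_notMem (hx : x ∉ A) : walk A x = walk A (x - 1) - 1 := by
  have hfilter : {a ∈ A | a ≤ x} = {a ∈ A | a ≤ x - 1} := by grind
  rw [walk, walk, hfilter]
  ring

lemma exists_mem_walk_eq_add_one (hvw : v < w) (hw : w ∉ A) (h : walk A v = walk A w) :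
    ∃ c ∈ A, v < c ∧ c < w ∧ walk A c = walk A v + 1 := by
  have hw' := walk_of_notMem hw
  have hne : v ≠ w - 1 := by rintro rfl; omega
  obtain ⟨c, ⟨hvc, hc⟩, hmin⟩ := Int.exists_least_of_bdd (P := fun x ↦ v < x ∧ walk A v < walk A x)
    ⟨v, fun x hx ↦ hx.1.le⟩ ⟨w - 1, by omega, by omega⟩
  have hcw : c ≤ w - 1 := hmin (w - 1) (by omega)
  have hprev : walk A (c - 1) ≤ walk A v := by
    by_contra! hlt
    have hne : v ≠ c - 1 := by rintro rfl; exact lt_irrefl _ hlt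
    have := hmin (c - 1) ⟨by omega, hlt⟩
    omega
  have hcA : c ∈ A := by
    by_contra hcA
    have := walk_of_notMem hcA
    omega
  have := walk_of_mem hcA
  exact ⟨c, hcA, hvc, by omega, by omega⟩

lemma exists_sparse_cut_of_walk_eq (hvw : v < w) (hw : w ∉ A) (h : walk A v = walk A w)
    (hv : walk A v ∈ Icc (2 * #A - hi - 1) (1 - lo)) :
    ∃ c ∈ A, v < c ∧ c < w ∧ 2 * (#{a ∈ A | a ≤ c} : ℤ) - 2 ≤ c - lo ∧
      2 * (#{a ∈ A | c ≤ a} : ℤ) - 2 ≤ hi - c := by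
  obtain ⟨c, hcA, hvc, hcw, hc⟩ := exists_mem_walk_eq_add_one hvw hw h
  have hsplit := card_filter_le_add_card_filter_ge A c
  rw [if_pos hcA] at hsplit
  rw [mem_Icc] at hv
  rw [walk] at hc
  exact ⟨c, hcA, hvc, hcw, by omega, by omega⟩

end Walk

section Residues

variable {A : Finset ℤ} {w lo hi : ℤ}

lemma walk_le_of_add_notMem (hlo : IsLeast (A : Set ℤ) lo) (hlow : lo ≤ w)
    (hw : lo + w ∉ A + A) : walk A w ≤ 1 - lo := by
  have hsub : {a ∈ A | a ≤ w} ⊆ Icc lo w := fun a ha ↦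
    mem_Icc.2 ⟨hlo.2 (mem_filter.1 ha).1, (mem_filter.1 ha).2⟩
  have hcard : 2 * #{a ∈ A | a ≤ w} ≤ #(Icc lo w) := by
    by_contra! hlt
    exact hw (add_subset_add (filter_subset _ _) (filter_subset _ _)
      (add_mem_add_self_of_card_Icc_lt hsub hlt))
  rw [Int.card_Icc] at hcard
  rw [walk]
  omega

lemma le_walk_of_add_notMem (hhi : IsGreatest (A : Set ℤ) hi) (hwhi : w ≤ hi) (hwA : w ∉ A)
    (hw : hi + w ∉ A + A) : 2 * #A - hi - 1 ≤ walk A w := by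
  have hsub : {a ∈ A | w ≤ a} ⊆ Icc w hi := fun a ha ↦
    mem_Icc.2 ⟨(mem_filter.1 ha).2, hhi.2 (mem_filter.1 ha).1⟩
  have hcard : 2 * #{a ∈ A | w ≤ a} ≤ #(Icc w hi) := by
    by_contra! hlt
    exact hw (add_comm w hi ▸ add_subset_add (filter_subset _ _) (filter_subset _ _)
      (add_mem_add_self_of_card_Icc_lt hsub hlt))
  have hsplit := card_filter_le_add_card_filter_ge A w
  rw [if_neg hwA] at hsplit
  rw [Int.card_Icc] at hcard
  rw [walk]
  omega

lemma card_add_card_residues_le (hlo : IsLeast (A : Set ℤ) lo) (hhi : IsGreatest (A : Set ℤ) hi) :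
    #A + #{w ∈ Ico lo hi | lo + w ∈ A + A ∨ hi + w ∈ A + A} ≤ #(A + A) := by
  set U := {w ∈ Ico lo hi | lo + w ∈ A + A}
  set V := {w ∈ Icc lo hi | hi + w ∈ A + A}
  have hdisj : Disjoint (U.image (lo + ·)) (V.image (hi + ·)) := by
    simp only [disjoint_left, mem_image, U, V, mem_filter, mem_Ico, mem_Icc]
    omega
  have hsums : U.image (lo + ·) ∪ V.image (hi + ·) ⊆ A + A := by
    refine union_subset (image_subset_iff.2 fun w hw ↦ ?_) (image_subset_iff.2 fun w hw ↦ ?_)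
    exacts [(mem_filter.1 hw).2, (mem_filter.1 hw).2]
  have hUV : #U + #V ≤ #(A + A) := by
    rw [← card_image_of_injective U (add_right_injective lo),
      ← card_image_of_injective V (add_right_injective hi), ← card_union_of_disjoint hdisj]
    exact card_le_card hsums
  have hinter : A.erase hi ⊆ U ∩ V := by
    intro a ha
    obtain ⟨hne, ha⟩ := mem_erase.1 ha
    have hbounds : lo ≤ a ∧ a ≤ hi := ⟨hlo.2 ha, hhi.2 ha⟩
    refine mem_inter.2 ⟨mem_filter.2 ⟨mem_Ico.2 (by omega), add_mem_add hlo.1 ha⟩,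
      mem_filter.2 ⟨mem_Icc.2 hbounds, add_mem_add hhi.1 ha⟩⟩
  have hunion : insert hi {w ∈ Ico lo hi | lo + w ∈ A + A ∨ hi + w ∈ A + A} ⊆ U ∪ V := by
    refine insert_subset (mem_union_right _ (mem_filter.2
      ⟨right_mem_Icc.2 (hlo.2 hhi.1), add_mem_add hhi.1 hhi.1⟩)) ?_
    rw [filter_or]
    exact union_subset_union_right (filter_subset_filter _ Ico_subset_Icc_self)
  have h1 := card_le_card hinter
  have h2 := card_le_card hunion
  rw [card_insert_of_notMem (by simp)] at h2
  rw [card_erase_of_mem hhi.1] at h1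
  have := card_union_add_card_inter U V
  omega

theorem exists_sparse_cut_or_le_card_add_self (hlo : IsLeast (A : Set ℤ) lo)
    (hhi : IsGreatest (A : Set ℤ) hi) :
    (∃ c ∈ A, lo < c ∧ c < hi ∧ 2 * (#{a ∈ A | a ≤ c} : ℤ) - 2 ≤ c - lo ∧
      2 * (#{a ∈ A | c ≤ a} : ℤ) - 2 ≤ hi - c) ∨
    #A + min (hi - lo) (2 * #A - 3) ≤ #(A + A) := by
  set missed := {w ∈ Ico lo hi | ¬(lo + w ∈ A + A ∨ hi + w ∈ A + A)}
  have hmissed : ∀ w ∈ missed, lo ≤ w ∧ w < hi ∧ w ∉ A ∧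
      walk A w ∈ Icc (2 * #A - hi - 1) (1 - lo) := by
    intro w hw
    obtain ⟨hwIco, hwU, hwV⟩ : w ∈ Ico lo hi ∧ lo + w ∉ A + A ∧ hi + w ∉ A + A := by
      simpa only [missed, mem_filter, not_or] using hw
    obtain ⟨hlow, hwhi⟩ := mem_Ico.1 hwIco
    have hwA : w ∉ A := fun h ↦ hwU (add_mem_add hlo.1 h)
    exact ⟨hlow, hwhi, hwA, mem_Icc.2 ⟨le_walk_of_add_notMem hhi hwhi.le hwA hwV,
      walk_le_of_add_notMem hlo hlow hwU⟩⟩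
  by_cases hinj : Set.InjOn (walk A) missed
  · right
    have hcard : #missed ≤ #(Icc (2 * #A - hi - 1) (1 - lo)) :=
      card_le_card_of_injOn _ (fun w hw ↦ (hmissed w hw).2.2.2) hinj
    rw [Int.card_Icc] at hcard
    have hhit := card_add_card_residues_le hlo hhi
    have htotal : #{w ∈ Ico lo hi | lo + w ∈ A + A ∨ hi + w ∈ A + A} + #missed = #(Ico lo hi) :=
      card_filter_add_card_filter_not _
    rw [Int.card_Ico] at htotal
    have : lo ≤ hi := hlo.2 hhi.1
    omega
  · left
    obtain ⟨v, hv, w, hw, hvw, hwalk⟩ :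
        ∃ v ∈ missed, ∃ w ∈ missed, v < w ∧ walk A v = walk A w := by
      simp only [Set.InjOn, not_forall] at hinj
      obtain ⟨v, hv, w, hw, heq, hne⟩ := hinj
      rcases lt_or_gt_of_ne hne with hlt | hlt
      exacts [⟨v, hv, w, hw, hlt, heq⟩, ⟨w, hw, v, hv, hlt, heq.symm⟩]
    obtain ⟨hlov, -, -, hvIcc⟩ := hmissed v hv
    obtain ⟨-, hwhi, hwA, -⟩ := hmissed w hw
    obtain ⟨c, hcA, hvc, hcw, hsparse⟩ := exists_sparse_cut_of_walk_eq hvw hwA hwalk hvIcc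
    exact ⟨c, hcA, by omega, by omega, hsparse⟩

end Residues

/-- A set of integers is primitive if it has at least two elements and the gcd of its differences is
one, that is, if no modulus other than `±1` puts it into a single residue class. The modulus `0`
is what excludes sets with at most one element. -/
def IsPrimitive (A : Finset ℤ) : Prop :=
  ∀ g : ℤ, (∀ a ∈ A, ∀ b ∈ A, a ≡ b [ZMOD g]) → IsUnit g

section Primitive

variable {A : Finset ℤ} {c g : ℤ}

lemma IsPrimitive.exists_not_modEq (hA : IsPrimitive A) (hg : ¬IsUnit g) (c : ℤ) :
    ∃ a ∈ A, ¬a ≡ c [ZMOD g] := by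
  by_contra! hall
  exact hg (hA g fun a ha b hb ↦ (hall a ha).trans (hall b hb).symm)

lemma IsPrimitive.erase_nonempty (hA : IsPrimitive A) (c : ℤ) :
    (A.erase c).Nonempty := by
  obtain ⟨a, ha, hac⟩ := hA.exists_not_modEq not_isUnit_zero c
  exact ⟨a, mem_erase.2 ⟨fun h ↦ hac (h ▸ rfl), ha⟩⟩

lemma exists_modEq_of_not_isPrimitive (hA : ¬IsPrimitive A) (hc : c ∈ A) :
    ∃ g : ℤ, ¬IsUnit g ∧ ∀ a ∈ A, a ≡ c [ZMOD g] := by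
  simp only [IsPrimitive, not_forall] at hA
  obtain ⟨g, hall, hg⟩ := hA
  exact ⟨g, hg, fun a ha ↦ hall a ha c hc⟩

lemma isPrimitive_of_add_one_mem (hc : c ∈ A) (hc' : c + 1 ∈ A) : IsPrimitive A := by
  intro g hg
  have := (hg c hc _ hc').dvd
  rwa [add_sub_cancel_left, ← isUnit_iff_dvd_one] at this

end Primitive

section Split

/-- The mixed sums `p + q` with `p ∈ P` and `q ∈ Q` that are neither sums of two elements of `P`
nor sums of two elements of `Q`. -/
def newSums (P Q : Finset ℤ) : Finset ℤ :=
  (P + Q) \ ((P + P) ∪ (Q + Q))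

variable {P Q : Finset ℤ} {c g x y lo hi : ℤ}

lemma card_add_card_newSums_le (hP : IsGreatest (P : Set ℤ) c) (hQ : IsLeast (Q : Set ℤ) c) :
    #(P + P) + #(Q + Q) + #(newSums P Q) ≤ #((P ∪ Q) + (P ∪ Q)) + 1 := by
  have hsums : (P + P) ∪ (Q + Q) ∪ newSums P Q ⊆ (P ∪ Q) + (P ∪ Q) := by
    have hPA : P ⊆ P ∪ Q := subset_union_left
    have hQA : Q ⊆ P ∪ Q := subset_union_right
    exact union_subset (union_subset (add_subset_add hPA hPA) (add_subset_add hQA hQA))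
      (sdiff_subset.trans (add_subset_add hPA hQA))
  have hcard := card_le_card hsums
  rw [card_union_of_disjoint (show Disjoint _ (newSums P Q) from disjoint_sdiff)] at hcard
  have hsplit := card_add_self_add_card_add_self_le hP.2 hQ.2
  rw [Icc_self, card_singleton] at hsplit
  omega

lemma add_mem_newSums (hP : IsGreatest (P : Set ℤ) c) (hQ : IsLeast (Q : Set ℤ) c)
    (hx : x ∈ P) (hy : y ∈ Q) (hxc : x < c) (hcy : c < y)
    (hxP : ∀ p ∈ P, x < p → p ≡ c [ZMOD g]) (hyQ : ∀ q ∈ Q, q < y → q ≡ c [ZMOD g])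
    (hxy : ¬x + y ≡ c + c [ZMOD g]) : x + y ∈ newSums P Q := by
  refine mem_sdiff.2 ⟨add_mem_add hx hy, fun hmem ↦ hxy ?_⟩
  rcases mem_union.1 hmem with hmem | hmem
  · obtain ⟨p, hp, p', hp', hsum⟩ := mem_add.1 hmem
    have := hP.2 hp
    have := hP.2 hp'
    exact hsum ▸ (hxP p hp (by omega)).add (hxP p' hp' (by omega))
  · obtain ⟨q, hq, q', hq', hsum⟩ := mem_add.1 hmem
    have := hQ.2 hq
    have := hQ.2 hq'
    exact hsum ▸ (hyQ q hq (by omega)).add (hyQ q' hq' (by omega))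

lemma erase_add_singleton_subset_newSums (hP : IsGreatest (P : Set ℤ) c)
    (hQ : IsLeast (Q : Set ℤ) c) (hPg : ∀ p ∈ P, p ≡ c [ZMOD g])
    (hy : Minimal (fun q ↦ q ∈ Q ∧ ¬q ≡ c [ZMOD g]) y) : P.erase c + {y} ⊆ newSums P Q := by
  intro z hz
  obtain ⟨x, hx, rfl⟩ : ∃ x ∈ P.erase c, x + y = z := by simpa [mem_add] using hz
  obtain ⟨hxc, hx⟩ := mem_erase.1 hx
  obtain ⟨hyQ, hyc⟩ := hy.prop
  refine add_mem_newSums hP hQ hx hyQ ((hP.2 hx).lt_of_ne hxc) ((hQ.2 hyQ).lt_of_ne ?_)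
    (fun p hp _ ↦ hPg p hp) (fun q hq hqy ↦ ?_) (fun h ↦ hyc ((hPg x hx).add_left_cancel h))
  · rintro rfl
    exact hyc rfl
  · by_contra hqc
    exact hy.not_prop_of_lt hqy ⟨hq, hqc⟩

lemma singleton_add_erase_subset_newSums (hP : IsGreatest (P : Set ℤ) c)
    (hQ : IsLeast (Q : Set ℤ) c) (hQg : ∀ q ∈ Q, q ≡ c [ZMOD g])
    (hx : Maximal (fun p ↦ p ∈ P ∧ ¬p ≡ c [ZMOD g]) x) : {x} + Q.erase c ⊆ newSums P Q := by
  intro z hz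
  obtain ⟨y, hy, rfl⟩ : ∃ y ∈ Q.erase c, x + y = z := by simpa [mem_add] using hz
  obtain ⟨hyc, hy⟩ := mem_erase.1 hy
  obtain ⟨hxP, hxc⟩ := hx.prop
  refine add_mem_newSums hP hQ hxP hy ((hP.2 hxP).lt_of_ne ?_) ((hQ.2 hy).lt_of_ne' hyc)
    (fun p hp hxp ↦ ?_) (fun q hq _ ↦ hQg q hq) (fun h ↦ hxc ((hQg y hy).add_right_cancel h))
  · rintro rfl
    exact hxc rfl
  · by_contra hpc
    exact hx.not_prop_of_gt hxp ⟨hp, hpc⟩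

lemma card_le_card_newSums_add_one_of_left (hP : IsGreatest (P : Set ℤ) c)
    (hQ : IsLeast (Q : Set ℤ) c) (hPg : ∀ p ∈ P, p ≡ c [ZMOD g])
    (hy : Minimal (fun q ↦ q ∈ Q ∧ ¬q ≡ c [ZMOD g]) y) : #P ≤ #(newSums P Q) + 1 := by
  have hcard := card_le_card (erase_add_singleton_subset_newSums hP hQ hPg hy)
  rw [card_add_singleton, card_erase_of_mem hP.1] at hcard
  omega

lemma card_le_card_newSums_add_one_of_right (hP : IsGreatest (P : Set ℤ) c)
    (hQ : IsLeast (Q : Set ℤ) c) (hQg : ∀ q ∈ Q, q ≡ c [ZMOD g])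
    (hx : Maximal (fun p ↦ p ∈ P ∧ ¬p ≡ c [ZMOD g]) x) : #Q ≤ #(newSums P Q) + 1 := by
  have hcard := card_le_card (singleton_add_erase_subset_newSums hP hQ hQg hx)
  rw [card_singleton_add, card_erase_of_mem hQ.1] at hcard
  omega

lemma card_add_card_le_card_newSums_add_three {h : ℤ} (hP : IsGreatest (P : Set ℤ) c)
    (hQ : IsLeast (Q : Set ℤ) c) (hPg : ∀ p ∈ P, p ≡ c [ZMOD g]) (hQh : ∀ q ∈ Q, q ≡ c [ZMOD h])
    (hx : Maximal (fun p ↦ p ∈ P ∧ ¬p ≡ c [ZMOD h]) x)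
    (hy : Minimal (fun q ↦ q ∈ Q ∧ ¬q ≡ c [ZMOD g]) y) :
    #P + #Q ≤ #(newSums P Q) + 3 := by
  have hinter : (P.erase c + {y}) ∩ ({x} + Q.erase c) ⊆ {x + y} := by
    intro z hz
    obtain ⟨⟨x', hx', rfl⟩, y', hy', hsum⟩ :
        (∃ x' ∈ P.erase c, x' + y = z) ∧ ∃ y' ∈ Q.erase c, x + y' = z := by
      simpa [mem_add] using hz
    have hxP := hx.prop.1
    have hyQ := hy.prop.1
    have hx'P := mem_of_mem_erase hx'
    have hy'Q := mem_of_mem_erase hy'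
    have hyy' : y' ≡ y [ZMOD g] :=
      ((hPg x hxP).trans (hPg x' hx'P).symm).add_left_cancel (hsum ▸ rfl)
    have hxx' : x ≡ x' [ZMOD h] :=
      ((hQh y' hy'Q).trans (hQh y hyQ).symm).add_right_cancel (hsum ▸ rfl)
    have hle_y : y ≤ y' := not_lt.1 fun hlt ↦
      hy.not_prop_of_lt hlt ⟨hy'Q, fun hc ↦ hy.prop.2 (hyy'.symm.trans hc)⟩
    have hle_x : x' ≤ x := not_lt.1 fun hlt ↦
      hx.not_prop_of_gt hlt ⟨hx'P, fun hc ↦ hx.prop.2 (hxx'.trans hc)⟩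
    rw [mem_singleton]
    omega
  have hcard := card_le_card (union_subset (erase_add_singleton_subset_newSums hP hQ hPg hy)
    (singleton_add_erase_subset_newSums hP hQ hQh hx))
  have hunion := card_union_add_card_inter (P.erase c + {y}) ({x} + Q.erase c)
  rw [card_add_singleton, card_singleton_add, card_erase_of_mem hP.1,
    card_erase_of_mem hQ.1] at hunion
  have := card_le_card hinter
  rw [card_singleton] at this
  omega

lemma newSums_nonempty (hP : IsGreatest (P : Set ℤ) c) (hQ : IsLeast (Q : Set ℤ) c)
    (hPprim : IsPrimitive P) (hQne : (Q.erase c).Nonempty) (hc : c + 1 ∉ Q) :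
    (newSums P Q).Nonempty := by
  obtain ⟨d, hd⟩ := (Q.erase c).exists_minimal hQne
  obtain ⟨hdc, hdQ⟩ := mem_erase.1 hd.prop
  have hcd : c < d := (hQ.2 hdQ).lt_of_ne' hdc
  have hd1 : d ≠ c + 1 := by rintro rfl; exact hc hdQ
  have hunit : ¬IsUnit (d - c) := by rw [Int.isUnit_iff]; omega
  have hdmod : d ≡ c [ZMOD d - c] := Int.modEq_sub d c
  obtain ⟨x, hx⟩ := (P.filter (¬· ≡ c [ZMOD d - c])).exists_maximal
    (filter_nonempty_iff.2 (hPprim.exists_not_modEq hunit c))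
  simp only [mem_filter] at hx
  obtain ⟨hxP, hxc⟩ := hx.prop
  refine ⟨x + d, add_mem_newSums hP hQ hxP hdQ ((hP.2 hxP).lt_of_ne ?_) hcd (fun p hp hxp ↦ ?_)
    (fun q hq hqd ↦ ?_) (fun h ↦ hxc (hdmod.add_right_cancel h))⟩
  · rintro rfl
    exact hxc rfl
  · by_contra hpc
    exact hx.not_prop_of_gt hxp ⟨hp, hpc⟩
  · have hqc : q = c := by
      by_contra hqc
      exact hd.not_prop_of_lt hqd (mem_erase.2 ⟨hqc, hq⟩)
    rw [hqc]

lemma IsPrimitive.exists_minimal_not_modEq_right (hPQ : IsPrimitive (P ∪ Q)) (hg : ¬IsUnit g)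
    (hPg : ∀ p ∈ P, p ≡ c [ZMOD g]) : ∃ y, Minimal (fun q ↦ q ∈ Q ∧ ¬q ≡ c [ZMOD g]) y := by
  obtain ⟨a, ha, hac⟩ := hPQ.exists_not_modEq hg c
  have haQ : a ∈ Q := (mem_union.1 ha).resolve_left fun haP ↦ hac (hPg a haP)
  simpa only [mem_filter] using (Q.filter (¬· ≡ c [ZMOD g])).exists_minimal
    ⟨a, mem_filter.2 ⟨haQ, hac⟩⟩

lemma IsPrimitive.exists_maximal_not_modEq_left (hPQ : IsPrimitive (P ∪ Q)) (hg : ¬IsUnit g)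
    (hQg : ∀ q ∈ Q, q ≡ c [ZMOD g]) : ∃ x, Maximal (fun p ↦ p ∈ P ∧ ¬p ≡ c [ZMOD g]) x := by
  obtain ⟨a, ha, hac⟩ := hPQ.exists_not_modEq hg c
  have haP : a ∈ P := (mem_union.1 ha).resolve_right fun haQ ↦ hac (hQg a haQ)
  simpa only [mem_filter] using (P.filter (¬· ≡ c [ZMOD g])).exists_maximal
    ⟨a, mem_filter.2 ⟨haP, hac⟩⟩

lemma three_mul_card_le_of_not_isPrimitive (hP : IsGreatest (P : Set ℤ) c)
    (hQ : IsLeast (Q : Set ℤ) c) (hPQ : IsPrimitive (P ∪ Q))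
    (hPbound : IsPrimitive P → 3 * #P ≤ #(P + P) + 3)
    (hQbound : IsPrimitive Q → 3 * #Q ≤ #(Q + Q) + 3) (h : ¬(IsPrimitive P ∧ IsPrimitive Q)) :
    3 * #(P ∪ Q) ≤ #((P ∪ Q) + (P ∪ Q)) + 3 := by
  have hcount := card_add_card_newSums_le hP hQ
  have hunion := card_union_add_one hP hQ
  have hPtriv := two_mul_card_le_card_add_self_add_one ⟨c, hP.1⟩
  have hQtriv := two_mul_card_le_card_add_self_add_one ⟨c, hQ.1⟩
  by_cases hPprim : IsPrimitive P
  · have hQprim : ¬IsPrimitive Q := fun hQprim ↦ h ⟨hPprim, hQprim⟩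
    obtain ⟨g, hg, hQg⟩ := exists_modEq_of_not_isPrimitive hQprim hQ.1
    obtain ⟨x, hx⟩ := hPQ.exists_maximal_not_modEq_left hg hQg
    have := card_le_card_newSums_add_one_of_right hP hQ hQg hx
    have := hPbound hPprim
    omega
  obtain ⟨g, hg, hPg⟩ := exists_modEq_of_not_isPrimitive hPprim hP.1
  obtain ⟨y, hy⟩ := hPQ.exists_minimal_not_modEq_right hg hPg
  by_cases hQprim : IsPrimitive Q
  · have := card_le_card_newSums_add_one_of_left hP hQ hPg hy
    have := hQbound hQprim
    omega
  · obtain ⟨g', hg', hQg'⟩ := exists_modEq_of_not_isPrimitive hQprim hQ.1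
    obtain ⟨x, hx⟩ := hPQ.exists_maximal_not_modEq_left hg' hQg'
    have := card_add_card_le_card_newSums_add_three hP hQ hPg hQg' hx hy
    omega

lemma three_mul_card_le_of_isPrimitive (hP : IsGreatest (P : Set ℤ) c)
    (hQ : IsLeast (Q : Set ℤ) c) (hPprim : IsPrimitive P) (hQprim : IsPrimitive Q)
    (hPbound : 3 * #P ≤ #(P + P) + 3) (hQbound : 3 * #Q ≤ #(Q + Q) + 3)
    (hPbound' : c + 1 ∈ Q → 3 * #(insert (c + 1) P) ≤ #(insert (c + 1) P + insert (c + 1) P) + 3) :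
    3 * #(P ∪ Q) ≤ #((P ∪ Q) + (P ∪ Q)) + 3 := by
  have hunion := card_union_add_one hP hQ
  by_cases hc : c + 1 ∈ Q
  · have hnotMem : c + 1 ∉ P := fun h ↦ (lt_add_one c).not_ge (hP.2 h)
    have hub : c + 1 ∈ upperBounds (insert (c + 1) P : Finset ℤ) := by
      intro p hp
      rcases mem_insert.1 hp with rfl | hp
      exacts [le_rfl, (hP.2 hp).trans (le_add_of_nonneg_right zero_le_one)]
    have hoverlap := card_add_self_add_card_add_self_le hub hQ.2
    rw [Int.card_Icc] at hoverlap
    have hsub : insert (c + 1) P ⊆ P ∪ Q :=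
      insert_subset (mem_union_right _ hc) subset_union_left
    have hsums := card_le_card (union_subset (add_subset_add hsub hsub)
      (add_subset_add (subset_union_right (s₁ := P)) subset_union_right))
    have hbound := hPbound' hc
    rw [card_insert_of_notMem hnotMem] at hbound
    omega
  · have hcount := card_add_card_newSums_le hP hQ
    have := (newSums_nonempty hP hQ hPprim (hQprim.erase_nonempty c) hc).card_pos
    omega

lemma three_mul_card_le_of_sparse_cut (hP : IsGreatest (P : Set ℤ) c) (hQ : IsLeast (Q : Set ℤ) c)
    (hlo : IsLeast (P : Set ℤ) lo) (hhi : IsGreatest (Q : Set ℤ) hi) (hloc : lo < c) (hchi : c < hi)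
    (hPsparse : 2 * (#P : ℤ) - 2 ≤ c - lo) (hQsparse : 2 * (#Q : ℤ) - 2 ≤ hi - c)
    (hPQ : IsPrimitive (P ∪ Q))
    (ih : ∀ B ⊂ P ∪ Q, ∀ b₀ b₁, IsLeast (B : Set ℤ) b₀ → IsGreatest (B : Set ℤ) b₁ →
      2 * (#B : ℤ) - 3 ≤ b₁ - b₀ → IsPrimitive B → 3 * #B ≤ #(B + B) + 3) :
    3 * #(P ∪ Q) ≤ #((P ∪ Q) + (P ∪ Q)) + 3 := by
  have hPss : P ⊂ P ∪ Q := ssubset_iff_of_subset subset_union_left |>.2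
    ⟨hi, mem_union_right _ hhi.1, fun h ↦ hchi.not_ge (hP.2 h)⟩
  have hQss : Q ⊂ P ∪ Q := ssubset_iff_of_subset subset_union_right |>.2
    ⟨lo, mem_union_left _ hlo.1, fun h ↦ hloc.not_ge (hQ.2 h)⟩
  have hPbound := ih P hPss lo c hlo hP (by omega)
  have hQbound := ih Q hQss c hi hQ hhi (by omega)
  by_cases hprim : IsPrimitive P ∧ IsPrimitive Q
  swap
  · exact three_mul_card_le_of_not_isPrimitive hP hQ hPQ hPbound hQbound hprim
  refine three_mul_card_le_of_isPrimitive hP hQ hprim.1 hprim.2 (hPbound hprim.1)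
    (hQbound hprim.2) fun hc ↦ ?_
  have hcP : c + 1 ∉ P := fun h ↦ (lt_add_one c).not_ge (hP.2 h)
  have hQcard : 1 < #Q := one_lt_card.2 ⟨c, hQ.1, hi, hhi.1, hchi.ne⟩
  have hss : insert (c + 1) P ⊂ P ∪ Q := by
    refine ssubset_iff_of_subset (insert_subset (mem_union_right _ hc) subset_union_left) |>.2
      ⟨hi, mem_union_right _ hhi.1, fun h ↦ ?_⟩
    rcases mem_insert.1 h with h | h
    exacts [by omega, hchi.not_ge (hP.2 h)]
  have hleast : IsLeast (insert (c + 1) P : Finset ℤ) lo := by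
    rw [coe_insert, ← min_eq_right (show lo ≤ c + 1 by omega)]
    exact hlo.insert _
  have hgreatest : IsGreatest (insert (c + 1) P : Finset ℤ) (c + 1) := by
    rw [coe_insert]
    nth_rw 2 [← max_eq_left (show c ≤ c + 1 by omega)]
    exact hP.insert _
  refine ih _ hss lo (c + 1) hleast hgreatest ?_
    (isPrimitive_of_add_one_mem (mem_insert_of_mem hP.1) (mem_insert_self _ _))
  rw [card_insert_of_notMem hcP]
  omega

end Split

section Main

variable {A : Finset ℤ} {lo hi : ℤ}

theorem IsPrimitive.card_add_min_le_card_add_self (hA : IsPrimitive A)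
    (hlo : IsLeast (A : Set ℤ) lo) (hhi : IsGreatest (A : Set ℤ) hi) :
    #A + min (hi - lo) (2 * #A - 3) ≤ #(A + A) := by
  induction A using Finset.strongInduction generalizing lo hi with | H A ih
  rcases exists_sparse_cut_or_le_card_add_self hlo hhi with
    ⟨c, hcA, hloc, hchi, hPsparse, hQsparse⟩ | hbound
  swap
  · exact hbound
  have hP := isGreatest_filter_le hcA
  have hQ := isLeast_filter_ge hcA
  have hloP : IsLeast ({a ∈ A | a ≤ c} : Set ℤ) lo := ⟨⟨hlo.1, hloc.le⟩, fun a ha ↦ hlo.2 ha.1⟩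
  have hhiQ : IsGreatest ({a ∈ A | c ≤ a} : Set ℤ) hi := ⟨⟨hhi.1, hchi.le⟩, fun a ha ↦ hhi.2 ha.1⟩
  have hPQ : {a ∈ A | a ≤ c} ∪ {a ∈ A | c ≤ a} = A := by
    rw [← filter_or, filter_true_of_mem fun a _ ↦ le_total a c]
  have hthree : 3 * #A ≤ #(A + A) + 3 := by
    have hstep := three_mul_card_le_of_sparse_cut hP hQ (by simpa using hloP) (by simpa using hhiQ)
      hloc hchi hPsparse hQsparse
    rw [hPQ] at hstep
    refine hstep hA fun B hBA b₀ b₁ hb₀ hb₁ hsparse hB ↦ ?_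
    have := ih B hBA hB hb₀ hb₁
    omega
  omega

lemma exists_isPrimitive_image (hA : A.Nontrivial) :
    ∃ a d : ℤ, d ≠ 0 ∧ ∃ B, IsPrimitive B ∧ B.image (fun x ↦ a + d * x) = A := by
  obtain ⟨a, ha⟩ := hA.nonempty
  obtain ⟨f, hf, hgcd⟩ := A.extract_gcd (· - a) hA.nonempty
  set d := A.gcd (· - a)
  have hd : d ≠ 0 := by
    intro hd
    obtain ⟨b, hb, hba⟩ := hA.exists_ne a
    exact hba (sub_eq_zero.1 (gcd_eq_zero_iff.1 hd b hb))
  have hfa : f a = 0 := by simpa [hd] using hf a ha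
  refine ⟨a, d, hd, A.image f, fun g hg ↦ ?_, ?_⟩
  · have hdvd : ∀ b ∈ A, g ∣ f b := fun b hb ↦ by
      simpa [hfa] using (hg _ (mem_image_of_mem f ha) _ (mem_image_of_mem f hb)).dvd
    exact isUnit_iff_dvd_one.2 (hgcd ▸ dvd_gcd hdvd)
  · rw [image_image]
    conv_rhs => rw [← image_id (s := A)]
    refine image_congr fun b hb ↦ ?_
    simp [← hf b hb]

lemma image_add_mul_subset_image_range {a d : ℤ} {B : Finset ℤ} {n : ℕ} (hB : B ⊆ Ico lo (lo + n)) :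
    B.image (fun x ↦ a + d * x) ⊆ (range n).image (fun i : ℕ ↦ a + d * lo + d * (i : ℤ)) := by
  refine image_subset_iff.2 fun x hx ↦ mem_image.2 ⟨(x - lo).toNat, ?_, ?_⟩
  all_goals obtain ⟨hlox, hxn⟩ := mem_Ico.1 (hB hx)
  · exact mem_range.2 (by omega)
  · rw [Int.toNat_of_nonneg (by omega)]
    ring

end Main

end Freiman

theorem freiman_3k4 (A : Finset ℤ) (k b : ℕ) (hk : A.card = k) (hk2 : 2 < k)
    (hsum : (A + A).card = 2 * k - 1 + b) (hb : 2 * k - 1 + b ≤ 3 * k - 4) :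
    (∃ a d : ℤ, A ⊆ (Finset.range (k + b)).image (fun i : ℕ => a + d * (i : ℤ))) ∧
      k + b ≤ 2 * k - 3 := by
  refine ⟨?_, by omega⟩
  obtain ⟨a, d, hd, B, hB, rfl⟩ :=
    Freiman.exists_isPrimitive_image (Finset.one_lt_card_iff_nontrivial.1 (by omega : 1 < A.card))
  rw [Freiman.card_image_add_mul_add_self a hd] at hsum
  rw [Finset.card_image_of_injective _ (Freiman.injective_add_mul a hd)] at hk
  have hne : B.Nonempty := Finset.card_pos.1 (by omega)
  have hbound := hB.card_add_min_le_card_add_self (B.isLeast_min' hne) (B.isGreatest_max' hne)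
  refine ⟨a + d * B.min' hne, d, Freiman.image_add_mul_subset_image_range fun x hx ↦ ?_⟩
  have hmin := B.min'_le x hx
  have hmax := B.le_max' x hx
  exact Finset.mem_Ico.2 (by omega)
end

section
/- Let A and B be finite nonempty subsets of an abelian group G with |A+B| < |A|+|B|. Then |A+B| = |A+H| + |B+H| - |H|, where H = {g ∈ G : g + (A+B) = A+B} is the stabilizer of A+B. -/
open Pointwise

/-!
Call `C` good for `(A, B)` if `#A + #B` is at most `#C` plus the size of the stabilizer of `C`. Fix
`a ∈ A` and `b ∈ B`. The Dyson transforms of `(A, B)` at `e = a' - b`, with `a' ∈ A`, preserve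
`#A + #B`, `a ∈ A` and `b ∈ B`, while `A + B` can only shrink. If all of them fix `B`, then `B - b`
stabilizes `A`, and `A + b` is good. So, by induction on `B`, every `a + b` lies in a good subset of
`A + B`. The union of two good sets is good: if `H₁` and `H₂` are their stabilizers, the points
of a suitable coset of `H₁ + H₂` where the sets differ make up for the loss in the stabilizer.
Hence `A + B` itself is good. With `H` its stabilizer, the sum of `A + H` and `B + H` is again
`A + B`, so this gives `#(A + H) + #(B + H) ≤ #(A + B) + #H`. As all these cardinalities are
multiples of `#H`, equality holds as soon as `#(A + B) < #A + #B`.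
-/

namespace Kneser

open Finset AddAction

section

variable {G α : Type*} [AddGroup G] [AddAction G α] [DecidableEq α]

lemma le_stabilizer_inter {H : AddSubgroup G} {S T : Finset α} (hS : H ≤ stabilizer G S)
    (hT : H ≤ stabilizer G T) : H ≤ stabilizer G (S ∩ T) := by
  rw [← stabilizer_coe_finset] at hS hT ⊢
  rw [coe_inter]
  exact (le_inf hS hT).trans stabilizer_inf_stabilizer_le_stabilizer_inter

lemma le_stabilizer_sdiff {H : AddSubgroup G} {S T : Finset α} (hS : H ≤ stabilizer G S)
    (hT : H ≤ stabilizer G T) : H ≤ stabilizer G (S \ T) := by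
  rw [← stabilizer_coe_finset] at hS hT ⊢
  rw [coe_sdiff]
  exact (le_inf hS hT).trans stabilizer_inf_stabilizer_le_stabilizer_sdiff

end

section AddGroup

variable {G : Type*} [AddGroup G]

lemma natCard_eq_card_of_coe_eq {H : AddSubgroup G} {F : Finset G} (hF : (F : Set G) = H) :
    Nat.card H = #F := by
  rw [← SetLike.coe_sort_coe, ← hF, Nat.card_coe_set_eq, Set.ncard_coe_finset]

variable [DecidableEq G]

lemma finite_stabilizer {S : Finset G} (hS : S.Nonempty) : Finite (stabilizer G S) := by
  rw [← stabilizer_coe_finset]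
  exact stabilizer_finite hS S.finite_toSet

lemma le_stabilizer_of_coe_eq {H : AddSubgroup G} {F : Finset G} (hF : (F : Set G) = H) :
    H ≤ stabilizer G F := by
  rw [← stabilizer_coe_finset, hF, stabilizer_addSubgroup]

lemma card_inf_stabilizer_le_card_stabilizer_union {S : Finset G} (hS : S.Nonempty)
    (T : Finset G) :
    Nat.card ↥(stabilizer G S ⊓ stabilizer G T) ≤ Nat.card (stabilizer G (S ∪ T)) := by
  have := finite_stabilizer (hS.mono (subset_union_left (s₂ := T)))
  apply AddSubgroup.card_le_of_le
  simpa only [← stabilizer_coe_finset, coe_union] using!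
    stabilizer_inf_stabilizer_le_stabilizer_union

lemma card_mul_card_le_card_inf_mul_card_add {H K : AddSubgroup G} [Finite ↥(H ⊓ K)]
    {S T : Finset G} (hS : (S : Set G) ⊆ H) (hT : (T : Set G) ⊆ K) :
    #S * #T ≤ Nat.card ↥(H ⊓ K) * #(S + T) := by
  rw [← card_product]
  refine card_le_mul_card_image (f := fun p : G × G ↦ p.1 + p.2) _ _ fun z hz ↦ ?_
  obtain ⟨⟨x₀, y₀⟩, h₀, rfl⟩ := mem_image.1 hz
  rw [mem_product] at h₀
  have hfin : ((H ⊓ K : AddSubgroup G) : Set G).Finite := Set.toFinite _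
  rw [natCard_eq_card_of_coe_eq hfin.coe_toFinset]
  refine card_le_card_of_injOn (fun p : G × G ↦ -x₀ + p.1) ?_ ?_
  · rintro ⟨x, y⟩ hp
    simp only [coe_filter, mem_product, Set.mem_ofPred_eq] at hp
    obtain ⟨⟨hx, hy⟩, hxy⟩ := hp
    have hdiff : -x₀ + x = y₀ - y := by
      rw [neg_add_eq_iff_eq_add, ← add_sub_assoc, ← hxy, add_sub_cancel_right]
    refine hfin.mem_toFinset.2 ⟨H.add_mem (H.neg_mem (hS h₀.1)) (hS hx), ?_⟩
    change -x₀ + x ∈ K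
    exact hdiff ▸ K.sub_mem (hT h₀.2) (hT hy)
  · rintro ⟨x, y⟩ hp ⟨x', y'⟩ hp' h
    simp only [coe_filter, mem_product, Set.mem_ofPred_eq] at hp hp'
    obtain rfl : x = x' := add_left_cancel h
    obtain rfl : y = y' := add_left_cancel (hp.2.trans hp'.2.symm)
    rfl

end AddGroup

section AddCommGroup

variable {G : Type*} [AddCommGroup G] [DecidableEq G]

lemma card_dvd_card_of_le_stabilizer {H : AddSubgroup G} {S : Finset G}
    (h : H ≤ stabilizer G S) : Nat.card H ∣ #S := by
  have hadd : (S : Set G) + H = S := by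
    rw [← stabilizer_coe_finset] at h
    refine ((Set.add_subset_add_left h).trans_eq (add_stabilizer_self _)).antisymm ?_
    exact Set.subset_add_left _ H.zero_mem
  have hcard := H.card_add_eq_card_addSubgroup_add_card_quotient (S : Set G)
  rw [hadd, Nat.card_coe_set_eq, Set.ncard_coe_finset] at hcard
  exact Dvd.intro _ hcard.symm

lemma card_le_card_of_le_stabilizer {H : AddSubgroup G} {S : Finset G}
    (h : H ≤ stabilizer G S) (hS : S.Nonempty) : Nat.card H ≤ #S :=
  Nat.le_of_dvd hS.card_pos (card_dvd_card_of_le_stabilizer h)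

lemma inter_add_sdiff_subset {H K : AddSubgroup G} {E F S T : Finset G} (hE : (E : Set G) ⊆ H)
    (hF : (F : Set G) ⊆ K) (hS : H ≤ stabilizer G S) (hT : K ≤ stabilizer G T) :
    E ∩ T + F \ S ⊆ T \ S := by
  rw [add_subset_iff]
  intro x hx y hy
  rw [mem_inter] at hx
  rw [mem_sdiff] at hy ⊢
  refine ⟨?_, fun h ↦ hy.2 <| (mem_stabilizer_finset.1 (hS (hE hx.1)) y).1 h⟩
  rw [add_comm]
  exact (mem_stabilizer_finset.1 (hT (hF hy.1)) x).2 hx.2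

lemma card_inter_mul_card_sdiff_le {H K : AddSubgroup G} [Finite ↥(H ⊓ K)] {E F S T : Finset G}
    (hE : (E : Set G) ⊆ H) (hF : (F : Set G) ⊆ K) (hS : H ≤ stabilizer G S)
    (hT : K ≤ stabilizer G T) :
    #(E ∩ T) * #(F \ S) ≤ Nat.card ↥(H ⊓ K) * #(T \ S) :=
  calc #(E ∩ T) * #(F \ S)
    _ ≤ Nat.card ↥(H ⊓ K) * #(E ∩ T + F \ S) :=
      card_mul_card_le_card_inf_mul_card_add ((coe_subset.2 inter_subset_left).trans hE)
        ((coe_subset.2 sdiff_subset).trans hF)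
    _ ≤ Nat.card ↥(H ⊓ K) * #(T \ S) := by
      gcongr
      exact inter_add_sdiff_subset hE hF hS hT

lemma add_le_or_add_le_of_mul_le_mul {k u v p q X Y : ℕ} (hk : 0 < k) (hv : k ≤ v) (hp : k ≤ p)
    (hu : u = 0 ∨ k ≤ u) (hq : q = 0 ∨ k ≤ q) (hX : v * p ≤ k * X) (hY : u * q ≤ k * Y)
    (hle : v + q ≤ u + p) : v + q ≤ X + k ∨ u + p ≤ Y + k := by
  by_contra! h
  obtain ⟨hXlt, hYlt⟩ := h
  have hX' : v * p + k * k < k * (v + q) := by nlinarith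
  have hY' : u * q + k * k < k * (u + p) := by nlinarith
  rcases hq with rfl | _
  · nlinarith [Nat.mul_le_mul_left v hp]
  rcases hu with rfl | hku
  · nlinarith [Nat.mul_le_mul_right p hv, Nat.mul_le_mul_left k hle]
  have hpq : p < q := by
    -- `0 ≤ (v - k) * (p - k)`, without subtraction
    have : k * p + k * v ≤ v * p + k * k := by nlinarith
    nlinarith
  have hqp : q < p := by
    have : k * q + k * u ≤ u * q + k * k := by nlinarith
    nlinarith
  exact hpq.asymm hqp

lemma card_le_card_sdiff_add_card_inf_or_of_zero_mem {H K : AddSubgroup G} {E F S T : Finset G}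
    (hE : (E : Set G) = H) (hF : (F : Set G) = K) (hS : H ≤ stabilizer G S)
    (hT : K ≤ stabilizer G T) (hle : #E ≤ #F) (hzT : 0 ∈ T) (hzS : 0 ∉ S) :
    #E ≤ #(T \ S) + Nat.card ↥(H ⊓ K) ∨ #F ≤ #(S \ T) + Nat.card ↥(H ⊓ K) := by
  have hzE : 0 ∈ E := by rw [← mem_coe, hE]; exact H.zero_mem
  have hzF : 0 ∈ F := by rw [← mem_coe, hF]; exact K.zero_mem
  have : Finite ↥(H ⊓ K) := E.finite_toSet.subset (hE.symm ▸ inf_le_left (b := K))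
  have hstabE : H ⊓ K ≤ stabilizer G E := inf_le_left.trans (le_stabilizer_of_coe_eq hE)
  have hstabF : H ⊓ K ≤ stabilizer G F := inf_le_right.trans (le_stabilizer_of_coe_eq hF)
  have hstabS : H ⊓ K ≤ stabilizer G S := inf_le_left.trans hS
  have hstabT : H ⊓ K ≤ stabilizer G T := inf_le_right.trans hT
  -- `E ∩ T`, `E \ T`, `F ∩ S` and `F \ S` are unions of cosets of `H ⊓ K`.
  have hle_card {U : Finset G} (hU : H ⊓ K ≤ stabilizer G U) :
      #U = 0 ∨ Nat.card ↥(H ⊓ K) ≤ #U :=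
    U.eq_empty_or_nonempty.imp card_eq_zero.2 (card_le_card_of_le_stabilizer hU)
  have hX := card_inter_mul_card_sdiff_le hE.subset hF.subset hS hT
  have hY : #(F ∩ S) * #(E \ T) ≤ Nat.card ↥(H ⊓ K) * #(S \ T) := by
    rw [inf_comm] at this ⊢
    exact card_inter_mul_card_sdiff_le hF.subset hE.subset hT hS
  rw [← card_inter_add_card_sdiff E T, ← card_inter_add_card_sdiff F S] at hle ⊢
  exact add_le_or_add_le_of_mul_le_mul Nat.card_pos
    (card_le_card_of_le_stabilizer (le_stabilizer_inter hstabE hstabT)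
      ⟨0, mem_inter.2 ⟨hzE, hzT⟩⟩)
    (card_le_card_of_le_stabilizer (le_stabilizer_sdiff hstabF hstabS)
      ⟨0, mem_sdiff.2 ⟨hzF, hzS⟩⟩)
    (hle_card (le_stabilizer_inter hstabF hstabS)) (hle_card (le_stabilizer_sdiff hstabE hstabT))
    hX hY hle

lemma card_le_card_sdiff_add_card_inf_or_of_not_subset {H K : AddSubgroup G} {E F S T : Finset G}
    (hE : (E : Set G) = H) (hF : (F : Set G) = K) (hS : H ≤ stabilizer G S)
    (hT : K ≤ stabilizer G T) (hle : #E ≤ #F) (hTS : ¬ T ⊆ S) :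
    #E ≤ #(T \ S) + Nat.card ↥(H ⊓ K) ∨ #F ≤ #(S \ T) + Nat.card ↥(H ⊓ K) := by
  obtain ⟨c, hcT, hcS⟩ := not_subset.1 hTS
  have h := card_le_card_sdiff_add_card_inf_or_of_zero_mem (S := -c +ᵥ S) (T := -c +ᵥ T) hE hF
    (hS.trans (le_stabilizer_vadd_right _ _)) (hT.trans (le_stabilizer_vadd_right _ _)) hle
    (by simpa [mem_neg_vadd_finset_iff] using hcT) (by simpa [mem_neg_vadd_finset_iff] using hcS)
  simpa only [← vadd_finset_sdiff, card_vadd_finset] using h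

lemma min_le_card_union_add_card_stabilizer {S T : Finset G} (hS : S.Nonempty)
    (hT : T.Nonempty) :
    min (#S + Nat.card (stabilizer G S)) (#T + Nat.card (stabilizer G T)) ≤
      #(S ∪ T) + Nat.card (stabilizer G (S ∪ T)) := by
  wlog hle : Nat.card (stabilizer G S) ≤ Nat.card (stabilizer G T) generalizing S T
  · rw [min_comm, union_comm]
    exact this hT hS (le_of_not_ge hle)
  by_cases hTS : T ⊆ S
  · rw [union_eq_left.2 hTS]
    exact min_le_left _ _
  have hfinS : (stabilizer G S : Set G).Finite := finite_stabilizer hS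
  have hfinT : (stabilizer G T : Set G).Finite := finite_stabilizer hT
  have hcardS : Nat.card (stabilizer G S) = #hfinS.toFinset :=
    natCard_eq_card_of_coe_eq hfinS.coe_toFinset
  have hcardT : Nat.card (stabilizer G T) = #hfinT.toFinset :=
    natCard_eq_card_of_coe_eq hfinT.coe_toFinset
  have hdich := card_le_card_sdiff_add_card_inf_or_of_not_subset hfinS.coe_toFinset
    hfinT.coe_toFinset le_rfl le_rfl (by rwa [← hcardS, ← hcardT]) hTS
  have hinf := card_inf_stabilizer_le_card_stabilizer_union hS T
  have hunionS : #(T \ S) + #S = #(S ∪ T) := by rw [card_sdiff_add_card, union_comm]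
  have hunionT : #(S \ T) + #T = #(S ∪ T) := card_sdiff_add_card S T
  rw [min_le_iff]
  omega

lemma card_le_card_stabilizer_of_add_mem {A B : Finset G} {b : G} (hA : A.Nonempty)
    (h : ∀ a ∈ A, ∀ x ∈ B, a - b + x ∈ A) : #B ≤ Nat.card (stabilizer G A) := by
  have hsub : ((-b +ᵥ B : Finset G) : Set G) ⊆ stabilizer G A := by
    intro g hg
    rw [mem_coe, mem_neg_vadd_finset_iff, vadd_eq_add] at hg
    refine mem_stabilizer_finset'.2 fun a ha ↦ ?_
    convert h a ha _ hg using 1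
    rw [vadd_eq_add]
    abel
  have hfin : (stabilizer G A : Set G).Finite := finite_stabilizer hA
  simpa only [Set.ncard_coe_finset, card_vadd_finset] using! Set.ncard_le_ncard hsub hfin

lemma exists_subset_add_mem_card_add_card_le {A B : Finset G} {a b : G} (ha : a ∈ A) (hb : b ∈ B) :
    ∃ C ⊆ A + B, a + b ∈ C ∧ #A + #B ≤ #C + Nat.card (stabilizer G C) := by
  induction B using Finset.strongInduction generalizing A with | H B ih
  by_cases hstab : ∀ a' ∈ A, ∀ x ∈ B, a' - b + x ∈ A
  · refine ⟨b +ᵥ A, ?_, ?_, ?_⟩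
    · rw [add_comm A]
      exact vadd_finset_subset_add hb
    · rw [add_comm]
      exact vadd_mem_vadd_finset ha
    · rw [card_vadd_finset, stabilizer_vadd_eq_right]
      gcongr
      exact card_le_card_stabilizer_of_add_mem ⟨a, ha⟩ hstab
  · push Not at hstab
    obtain ⟨a', ha', x, hx, hxA⟩ := hstab
    set e := a' - b with he
    have hmem {y : G} : y ∈ -e +ᵥ A ↔ e + y ∈ A := mem_neg_vadd_finset_iff
    have hss : B ∩ (-e +ᵥ A) ⊂ B :=
      inter_subset_left.ssubset_of_not_subset fun h ↦ hxA (hmem.1 (mem_of_mem_inter_right (h hx)))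
    obtain ⟨C, hCsub, hC, hcard⟩ := ih _ hss (A := A ∪ (e +ᵥ B)) (mem_union_left _ ha)
      (mem_inter.2 ⟨hb, hmem.2 (by rwa [he, sub_add_cancel])⟩)
    refine ⟨C, hCsub.trans (addDysonETransform.subset e (A, B)), hC, ?_⟩
    rwa [← addDysonETransform.card e (A, B)]

theorem card_add_card_le_card_add_add_card_stabilizer {A B : Finset G} (hA : A.Nonempty)
    (hB : B.Nonempty) : #A + #B ≤ #(A + B) + Nat.card (stabilizer G (A + B)) := by
  have hcover : ∀ x ∈ A + B, ∃ C ⊆ A + B, x ∈ C ∧ #A + #B ≤ #C + Nat.card (stabilizer G C) := by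
    intro x hx
    obtain ⟨a, ha, b, hb, rfl⟩ := mem_add.1 hx
    exact exists_subset_add_mem_card_add_card_le ha hb
  choose! C hCsub hC hcard using hcover
  have hsup : (A + B).sup' (hA.add hB) C = A + B :=
    (sup'_le _ _ hCsub).antisymm fun x hx ↦ le_sup' C hx (hC x hx)
  have hgood : ((A + B).sup' (hA.add hB) C).Nonempty ∧ #A + #B ≤
      #((A + B).sup' (hA.add hB) C) + Nat.card (stabilizer G ((A + B).sup' (hA.add hB) C)) :=
    sup'_induction (p := fun D ↦ D.Nonempty ∧ #A + #B ≤ #D + Nat.card (stabilizer G D)) _ _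
      (fun S hS T hT ↦ ⟨hS.1.mono subset_union_left,
        (le_min hS.2 hT.2).trans (min_le_card_union_add_card_stabilizer hS.1 hT.1)⟩)
      fun x hx ↦ ⟨⟨x, hC x hx⟩, hcard x hx⟩
  rw [hsup] at hgood
  exact hgood.2

theorem card_add_add_card_add_le_of_coe_eq_stabilizer {A B H : Finset G} (hA : A.Nonempty)
    (hB : B.Nonempty) (hH : (H : Set G) = stabilizer G (A + B)) :
    #(A + H) + #(B + H) ≤ #(A + B) + #H := by
  have hne : H.Nonempty := by
    rw [← coe_nonempty, hH]
    exact ⟨0, zero_mem _⟩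
  have hsum : A + H + (B + H) = A + B := by
    rw [add_add_add_comm]
    apply coe_injective
    rw [coe_add, coe_add H, hH, coe_add_coe, ← stabilizer_coe_finset, add_stabilizer_self]
  simpa only [hsum, natCard_eq_card_of_coe_eq hH] using
    card_add_card_le_card_add_add_card_stabilizer (hA.add hne) (hB.add hne)

end AddCommGroup

end Kneser

theorem kneser_theorem {G : Type*} [AddCommGroup G] [DecidableEq G]
    (A B H : Finset G) (hA : A.Nonempty) (hB : B.Nonempty)
    (hcard : (A + B).card < A.card + B.card)
    (hH : ∀ g : G, g ∈ H ↔ ∀ x ∈ A + B, g + x ∈ A + B) :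
    (A + B).card + H.card = (A + H).card + (B + H).card := by
  have hstab : (H : Set G) = AddAction.stabilizer G (A + B) := by
    ext g
    rw [SetLike.mem_coe, SetLike.mem_coe, hH, AddAction.mem_stabilizer_finset']
    rfl
  have hzero : 0 ∈ H := (hH 0).2 fun x hx ↦ by rwa [zero_add]
  have hlt : (A + B).card < (A + H).card + (B + H).card :=
    hcard.trans_le <| add_le_add (Finset.card_le_card (Finset.subset_add_left A hzero))
      (Finset.card_le_card (Finset.subset_add_left B hzero))
  have hdvd {S : Finset G} (hS : AddAction.stabilizer G (A + B) ≤ AddAction.stabilizer G S) :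
      H.card ∣ S.card :=
    Kneser.natCard_eq_card_of_coe_eq hstab ▸ Kneser.card_dvd_card_of_le_stabilizer hS
  have hdvd_add (S : Finset G) : H.card ∣ (S + H).card :=
    hdvd <| (Kneser.le_stabilizer_of_coe_eq hstab).trans (AddAction.le_stabilizer_vadd_right S H)
  have hmod : (A + B).card ≡ (A + H).card + (B + H).card [MOD H.card] :=
    (hdvd le_rfl).modEq_zero_nat.trans
      (dvd_add (hdvd_add A) (hdvd_add B)).modEq_zero_nat.symm
  exact (hmod.add_le_of_lt hlt).antisymm
    (Kneser.card_add_add_card_add_le_of_coe_eq_stabilizer hA hB hstab)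
end

section
/- Let U = {0 = u_1 < u_2 < ... < u_s} and V = {v_1 < ... < v_t} be nonempty finite sets of integers with V ⊆ U and gcd(u_2, ..., u_s) = 1. Then |U+V| ≥ min(u_s + t, s + 2t - 3). Moreover, if U ≠ V and u_s = s + t - 2, then |U+V| ≥ u_s + t. -/
open Pointwise

/-!
Let `n = uS`, and let `A` and `B` be the images of `U` and `V` in `ZMod n`. Since `U + V` contains
both `V` and `n + V`, the least representative in `U + V` of a class of `A + B` is never in `n + V`,
so `|U + V| ≥ |A + B| + |V|`; in particular `|U + V| ≥ n + |V|` when `A + B` is everything.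

Let `H` be the stabilizer of `A + B`. If `A + B ⊆ B + H`, then `B + H` is stable under adding `A`,
which generates `ZMod n` because the gcd is `1`; hence `A + B` is everything. Otherwise some coset
`a + b + H` with `a ∈ A`, `b ∈ B` misses `B`. The residues outside it are counted as above, those
inside it by the bound `|X + Y| ≥ |X| + |Y| - 1` in `ℤ` applied to the parts of `U` over `a + H` and
of `V` over `b + H`, and Kneser's theorem `|A + H| + |B + H| ≤ |A + B| + |H|` combines the two.

Kneser's theorem comes from Dyson's transform, which puts every element of `A + B` in a subset `C`
of `A + B` with `|A| + |B| ≤ |C| + |stab C|`, and from the fact that a lower bound for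
`|C| + |stab C|` passes to unions.

In the boundary case with `0, n ∈ V`, we have `|A| + |B| = n`, so each residue `x` missed by `A + B`
satisfies `x - A = Bᶜ`. Differences of missed residues therefore stabilize both `A` and `B`, and at
most `|A \ B|` residues are missed; the lifts of `U ∪ V` and `n + (U ∪ V)` make up for them.
-/

section Kneser

open Finset

variable {G : Type*} [AddCommGroup G] [DecidableEq G] {A B C D : Finset G} {g x y : G}

/-- The stabilizer of a finset `C` under translation, as a finset. For `C = ∅`, whose true
stabilizer is all of `G`, it is `∅`. -/
def addStab (C : Finset G) : Finset G := {g ∈ C - C | g +ᵥ C = C}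

lemma mem_addStab : g ∈ addStab C ↔ C.Nonempty ∧ g ∈ AddAction.stabilizer G C := by
  rw [addStab, mem_filter, AddAction.mem_stabilizer_iff, and_congr_left_iff]
  intro hg
  refine ⟨fun h ↦ (sub_nonempty.1 ⟨g, h⟩).1, fun ⟨c, hc⟩ ↦ mem_sub.2 ⟨g +ᵥ c, ?_, c, hc, ?_⟩⟩
  · exact hg ▸ vadd_mem_vadd_finset hc
  · rw [vadd_eq_add, add_sub_cancel_right]

lemma vadd_finset_eq_of_mem_addStab (hg : g ∈ addStab C) : g +ᵥ C = C :=
  (mem_filter.1 hg).2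

lemma mem_addStab_of_forall_vadd_mem (hC : C.Nonempty) (h : ∀ ⦃c⦄, c ∈ C → g +ᵥ c ∈ C) :
    g ∈ addStab C :=
  mem_addStab.2 ⟨hC, AddAction.mem_stabilizer_finset'.2 h⟩

lemma zero_mem_addStab (hC : C.Nonempty) : 0 ∈ addStab C :=
  mem_addStab.2 ⟨hC, zero_mem _⟩

lemma neg_mem_addStab (hg : g ∈ addStab C) : -g ∈ addStab C := by
  rw [mem_addStab] at hg ⊢
  exact hg.imp_right neg_mem

lemma vadd_addStab (hg : g ∈ addStab C) : g +ᵥ addStab C = addStab C := by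
  refine eq_of_subset_of_card_le (fun x hx ↦ ?_) (card_vadd_finset _ _).ge
  obtain ⟨k, hk, rfl⟩ := mem_vadd_finset.1 hx
  rw [mem_addStab] at hg hk ⊢
  exact ⟨hg.1, add_mem hg.2 hk.2⟩

lemma addStab_add_addStab (C : Finset G) : addStab C + addStab C = addStab C := by
  refine subset_antisymm (fun x hx ↦ ?_) fun x hx ↦ ?_
  · obtain ⟨g, hg, k, hk, rfl⟩ := mem_add.1 hx
    exact vadd_addStab hg ▸ vadd_mem_vadd_finset hk
  · simpa only [add_zero] using add_mem_add hx (zero_mem_addStab (mem_addStab.1 hx).1)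

lemma add_addStab (C : Finset G) : C + addStab C = C := by
  refine subset_antisymm (fun x hx ↦ ?_) fun x hx ↦ ?_
  · obtain ⟨c, hc, g, hg, rfl⟩ := mem_add.1 hx
    rw [add_comm, ← vadd_finset_eq_of_mem_addStab hg]
    exact vadd_mem_vadd_finset hc
  · simpa only [add_zero] using add_mem_add hx (zero_mem_addStab ⟨x, hx⟩)

lemma mem_iff_of_mem_vadd_addStab (h : y ∈ x +ᵥ addStab C) : y ∈ C ↔ x ∈ C := by
  obtain ⟨g, hg, rfl⟩ := mem_vadd_finset.1 h
  nth_rw 1 [← vadd_finset_eq_of_mem_addStab hg]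
  rw [vadd_eq_add, add_comm, ← vadd_eq_add, vadd_mem_vadd_finset_iff]

lemma vadd_addStab_subset (hx : x ∈ C) : x +ᵥ addStab C ⊆ C :=
  fun _ hy ↦ (mem_iff_of_mem_vadd_addStab hy).2 hx

lemma disjoint_vadd_addStab (hx : x ∉ C) : Disjoint (x +ᵥ addStab C) C :=
  disjoint_left.2 fun _ hy ↦ (mem_iff_of_mem_vadd_addStab hy).not.2 hx

lemma inter_addStab_subset_addStab_union (C D : Finset G) :
    addStab C ∩ addStab D ⊆ addStab (C ∪ D) := by
  intro g hg
  rw [mem_inter] at hg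
  refine mem_addStab.2 ⟨(mem_addStab.1 hg.1).1.inl, AddAction.mem_stabilizer_iff.2 ?_⟩
  rw [vadd_finset_union, vadd_finset_eq_of_mem_addStab hg.1, vadd_finset_eq_of_mem_addStab hg.2]

lemma mem_vadd_addStab_add_addStab_comm :
    y ∈ x +ᵥ (addStab C + addStab D) ↔ x ∈ y +ᵥ (addStab D + addStab C) := by
  suffices ∀ {C D : Finset G} {x y : G}, y ∈ x +ᵥ (addStab C + addStab D) →
    x ∈ y +ᵥ (addStab D + addStab C) from ⟨this, this⟩
  intro C D x y h
  obtain ⟨k, hk, rfl⟩ := mem_vadd_finset.1 h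
  obtain ⟨c, hc, d, hd, rfl⟩ := mem_add.1 hk
  refine mem_vadd_finset.2 ⟨-d + -c, add_mem_add (neg_mem_addStab hd) (neg_mem_addStab hc), ?_⟩
  simp only [vadd_eq_add]
  abel

lemma card_vadd_addStab_inter_eq (h : y ∈ x +ᵥ (addStab C + addStab D)) :
    #((y +ᵥ addStab D) ∩ C) = #((x +ᵥ addStab D) ∩ C) := by
  obtain ⟨k, hk, rfl⟩ := mem_vadd_finset.1 h
  obtain ⟨c, hc, d, hd, rfl⟩ := mem_add.1 hk
  have hcoset : (x +ᵥ (c + d)) +ᵥ addStab D = c +ᵥ (x +ᵥ addStab D) := by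
    rw [vadd_eq_add, add_left_comm, ← add_assoc, add_vadd, vadd_addStab hd, add_vadd]
  nth_rw 1 [hcoset, ← vadd_finset_eq_of_mem_addStab hc]
  rw [← vadd_finset_inter, card_vadd_finset]

lemma card_addStab_add_card_vadd_addStab_inter_le (hxC : x ∈ C) (hxD : x ∉ D) :
    #(addStab C) + #((x +ᵥ addStab D) ∩ C) ≤
      #(C \ D) + #(addStab C ∩ addStab D) + #((x +ᵥ addStab C) ∩ D) := by
  set P := (x +ᵥ addStab C) \ D
  set Q := (x +ᵥ addStab D) ∩ C
  have hunion : P ∪ Q ⊆ C \ D := union_subset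
    (sdiff_subset_sdiff (vadd_addStab_subset hxC) subset_rfl)
    (subset_sdiff.2 ⟨inter_subset_right, (disjoint_vadd_addStab hxD).mono_left inter_subset_left⟩)
  have hinter : P ∩ Q ⊆ x +ᵥ (addStab C ∩ addStab D) := by
    rw [vadd_finset_inter]
    exact inter_subset_inter sdiff_subset inter_subset_left
  have hP : #P + #((x +ᵥ addStab C) ∩ D) = #(addStab C) := by
    rw [card_sdiff_add_card_inter, card_vadd_finset]
  have hPQ := card_union_add_card_inter P Q
  have hunion_card := card_le_card hunion
  have hinter_card := card_le_card hinter
  rw [card_vadd_finset] at hinter_card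
  omega

lemma card_addStab_le_card_sdiff_or (hxC : x ∈ C) (hxD : x ∉ D)
    (h : ∀ y ∈ x +ᵥ (addStab C + addStab D), y ∈ D → y ∈ C) :
    #(addStab C) ≤ #(C \ D) ∨ #(addStab D) ≤ #(C \ D) := by
  by_cases hdisj : Disjoint (x +ᵥ addStab C) D
  · left
    rw [← card_vadd_finset x]
    exact card_le_card (subset_sdiff.2 ⟨vadd_addStab_subset hxC, hdisj⟩)
  · right
    obtain ⟨y, hy, hyD⟩ := not_disjoint_iff.1 hdisj
    obtain ⟨g, hg, rfl⟩ := mem_vadd_finset.1 hy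
    rw [← card_vadd_finset x]
    refine card_le_card (subset_sdiff.2 ⟨fun z hz ↦ ?_, disjoint_vadd_addStab hxD⟩)
    obtain ⟨k, hk, rfl⟩ := mem_vadd_finset.1 hz
    have hmemD : x + g + k ∈ D := vadd_addStab_subset hyD (vadd_mem_vadd_finset hk)
    rw [add_assoc] at hmemD
    have hmemC := h _ (vadd_mem_vadd_finset (add_mem_add hg hk)) hmemD
    rwa [vadd_eq_add, add_left_comm, ← vadd_eq_add, ← vadd_finset_eq_of_mem_addStab hg,
      vadd_mem_vadd_finset_iff] at hmemC

theorem min_card_add_card_addStab_le_union (C D : Finset G) :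
    min (#C + #(addStab C)) (#D + #(addStab D)) ≤ #(C ∪ D) + #(addStab (C ∪ D)) := by
  by_cases hCD : C ⊆ D
  · rw [union_eq_right.2 hCD]
    exact min_le_right _ _
  by_cases hDC : D ⊆ C
  · rw [union_eq_left.2 hDC]
    exact min_le_left _ _
  have hC : #(D \ C) + #C = #(C ∪ D) := by rw [card_sdiff_add_card, union_comm]
  have hD : #(C \ D) + #D = #(C ∪ D) := card_sdiff_add_card C D
  have hstab := card_le_card (inter_addStab_subset_addStab_union C D)
  by_cases hclose : ∃ x y, x ∈ C ∧ x ∉ D ∧ y ∈ D ∧ y ∉ C ∧ y ∈ x +ᵥ (addStab C + addStab D)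
  · obtain ⟨x, y, hxC, hxD, hyD, hyC, hxy⟩ := hclose
    -- In the sum of the two bounds the intersection terms cancel: they depend only on the coset
    -- modulo `addStab C + addStab D`, which `x` and `y` share.
    have hx := card_addStab_add_card_vadd_addStab_inter_le hxC hxD
    have hy := card_addStab_add_card_vadd_addStab_inter_le hyD hyC
    have hxy' : y ∈ x +ᵥ (addStab D + addStab C) := by rwa [add_comm (addStab D)]
    rw [card_vadd_addStab_inter_eq hxy, card_vadd_addStab_inter_eq hxy',
      inter_comm (addStab D)] at hy
    omega
  · push Not at hclose
    obtain ⟨x, hxC, hxD⟩ := not_subset.1 hCD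
    obtain ⟨y, hyD, hyC⟩ := not_subset.1 hDC
    have hx := card_addStab_le_card_sdiff_or hxC hxD fun z hz hzD ↦ by
      by_contra hzC
      exact hclose x z hxC hxD hzD hzC hz
    have hy := card_addStab_le_card_sdiff_or hyD hyC fun z hz hzC ↦ by
      by_contra hzD
      exact hclose z y hzC hzD hyD hyC (mem_vadd_addStab_add_addStab_comm.1 hz)
    omega

lemma exists_subset_add_of_zero_mem {a : G} (ha : a ∈ A) (hB : 0 ∈ B) :
    ∃ C ⊆ A + B, a ∈ C ∧ #A + #B ≤ #C + #(addStab C) := by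
  induction B using Finset.strongInduction generalizing A with
  | H B ih =>
  by_cases hAB : ∀ e ∈ A, ∀ b ∈ B, e + b ∈ A
  · have hsub : B ⊆ addStab A := fun b hb ↦
      mem_addStab_of_forall_vadd_mem ⟨a, ha⟩ fun e he ↦ by
        rw [vadd_eq_add, add_comm]
        exact hAB e he b hb
    exact ⟨A, subset_add_left A hB, ha, by grw [hsub]⟩
  · push Not at hAB
    obtain ⟨e, he, b, hb, hebA⟩ := hAB
    let T := addDysonETransform e (A, B)
    have hlt : T.2 ⊂ B := by
      refine ⟨inter_subset_left, fun h ↦ hebA ?_⟩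
      simpa [T, mem_neg_vadd_finset_iff] using (mem_inter.1 (h hb)).2
    have hzero : 0 ∈ T.2 := mem_inter.2 ⟨hB, by simpa [mem_neg_vadd_finset_iff] using he⟩
    obtain ⟨C, hC, haC, hcard⟩ := ih T.2 hlt (mem_union_left _ ha : a ∈ T.1) hzero
    exact ⟨C, hC.trans (addDysonETransform.subset e (A, B)), haC,
      (addDysonETransform.card e (A, B)).ge.trans hcard⟩

lemma exists_subset_add_of_mem {c : G} (hc : c ∈ A + B) :
    ∃ C ⊆ A + B, c ∈ C ∧ #A + #B ≤ #C + #(addStab C) := by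
  obtain ⟨a, ha, b, hb, rfl⟩ := mem_add.1 hc
  have ha' : a + b ∈ b +ᵥ A := mem_vadd_finset.2 ⟨a, ha, add_comm b a⟩
  have hb' : 0 ∈ -b +ᵥ B := mem_vadd_finset.2 ⟨b, hb, neg_add_cancel b⟩
  simpa only [vadd_add_vadd_comm, add_neg_cancel, zero_vadd, card_vadd_finset] using
    exists_subset_add_of_zero_mem ha' hb'

lemma le_card_add_card_addStab_biUnion {ι : Type*} {s : Finset ι} (hs : s.Nonempty)
    {F : ι → Finset G} {m : ℕ} (h : ∀ i ∈ s, m ≤ #(F i) + #(addStab (F i))) :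
    m ≤ #(s.biUnion F) + #(addStab (s.biUnion F)) := by
  classical
  induction hs using Finset.Nonempty.cons_induction with
  | singleton i => simpa using h
  | cons i s hi _ ih =>
    rw [forall_mem_cons] at h
    rw [cons_eq_insert, biUnion_insert]
    exact (le_min h.1 (ih h.2)).trans (min_card_add_card_addStab_le_union _ _)

theorem card_add_card_le_card_add_card_addStab (hA : A.Nonempty) (hB : B.Nonempty) :
    #A + #B ≤ #(A + B) + #(addStab (A + B)) := by
  choose! F hFsub hmem hcard using fun c (hc : c ∈ A + B) ↦ exists_subset_add_of_mem hc
  have hunion : (A + B).biUnion F = A + B := subset_antisymm (biUnion_subset.2 hFsub)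
    fun c hc ↦ mem_biUnion.2 ⟨c, hc, hmem c hc⟩
  simpa only [hunion] using le_card_add_card_addStab_biUnion (hA.add hB) hcard

theorem kneser (hA : A.Nonempty) (hB : B.Nonempty) :
    #(A + addStab (A + B)) + #(B + addStab (A + B)) ≤ #(A + B) + #(addStab (A + B)) := by
  have hH : (addStab (A + B)).Nonempty := ⟨0, zero_mem_addStab (hA.add hB)⟩
  simpa only [add_add_add_comm A, addStab_add_addStab, add_addStab] using
    card_add_card_le_card_add_card_addStab (hA.add hH) (hB.add hH)

end Kneser

section FiniteGroup

open Finset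

variable {G : Type*} [AddCommGroup G] [DecidableEq G] {A B : Finset G} {x y : G}

lemma eq_univ_of_add_subset [Fintype G] (hA : AddSubgroup.closure (A : Set G) = ⊤)
    (hB : B.Nonempty) (hAB : A + B ⊆ B) : B = univ := by
  have hstab : AddSubgroup.closure (A : Set G) ≤ AddAction.stabilizer G B :=
    (AddSubgroup.closure_le _).2 fun a ha ↦
      AddAction.mem_stabilizer_finset'.2 fun b hb ↦ hAB (add_mem_add ha hb)
  rw [hA, top_le_iff] at hstab
  obtain ⟨b, hb⟩ := hB
  refine eq_univ_of_forall fun x ↦ ?_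
  have hx : x - b ∈ AddAction.stabilizer G B := hstab ▸ AddSubgroup.mem_top _
  simpa using AddAction.mem_stabilizer_finset'.1 hx hb

lemma add_eq_univ_of_card_lt [Fintype G] (h : Fintype.card G < #A + #B) : A + B = univ := by
  refine eq_univ_of_forall fun x ↦ ?_
  have hcard : #(univ : Finset G) < #A + #(x +ᵥ -B) := by
    rwa [card_vadd_finset, card_neg, card_univ]
  obtain ⟨a, ha⟩ := inter_nonempty_of_card_lt_card_add_card (subset_univ _) (subset_univ _) hcard
  rw [mem_inter, mem_vadd_finset] at ha
  obtain ⟨haA, b, hb, rfl⟩ := ha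
  exact mem_add.2 ⟨_, haA, -b, mem_neg'.1 hb, by simp⟩

lemma vadd_neg_eq_compl_of_notMem_add [Fintype G] (h : Fintype.card G = #A + #B)
    (hx : x ∉ A + B) : x +ᵥ -A = Bᶜ := by
  refine eq_of_subset_of_card_le (fun z hz ↦ mem_compl.2 fun hzB ↦ hx ?_) ?_
  · obtain ⟨a, ha, rfl⟩ := mem_vadd_finset.1 hz
    exact mem_add.2 ⟨-a, mem_neg'.1 ha, _, hzB, by simp⟩
  · rw [card_vadd_finset, card_neg, card_compl, h, Nat.add_sub_cancel]

lemma sub_mem_stabilizer_of_notMem_add [Fintype G] (h : Fintype.card G = #A + #B)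
    (hx : x ∉ A + B) (hy : y ∉ A + B) : y - x ∈ AddAction.stabilizer G B := by
  have hmem {z : G} (hz : z ∉ A + B) (b : G) : b ∈ B ↔ -z +ᵥ b ∉ -A := by
    rw [neg_vadd_mem_iff, vadd_neg_eq_compl_of_notMem_add h hz, mem_compl, not_not]
  rw [AddAction.mem_stabilizer_finset]
  intro b
  rw [hmem hy, hmem hx, vadd_vadd, neg_add_eq_sub, sub_sub_cancel_left]

lemma card_compl_add_le_card_sdiff [Fintype G] (h : Fintype.card G = #A + #B)
    (hAB : ¬ A ⊆ B) : #(A + B)ᶜ ≤ #(A \ B) := by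
  obtain hM | ⟨x, hx⟩ := (A + B)ᶜ.eq_empty_or_nonempty
  · simp [hM]
  obtain ⟨a, haA, haB⟩ := not_subset.1 hAB
  refine card_le_card_of_injOn (fun y ↦ (y - x) +ᵥ a) (fun y hy ↦ ?_) fun y _ z _ hyz ↦ ?_
  · rw [mem_coe, mem_compl] at hy
    rw [mem_compl] at hx
    have hstabB := sub_mem_stabilizer_of_notMem_add h hx hy
    rw [add_comm A] at hx hy
    have hstabA := sub_mem_stabilizer_of_notMem_add (h.trans (add_comm _ _)) hx hy
    rw [AddAction.mem_stabilizer_finset] at hstabA hstabB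
    exact mem_sdiff.2 ⟨(hstabA a).2 haA, (hstabB a).not.2 haB⟩
  · simpa using hyz

lemma card_add_card_le_of_zero_mem (hx : x ∈ A) (hB : 0 ∈ B) :
    #A + #B ≤ #(A + B) + #(A ∩ (x +ᵥ B)) := by
  have hsub : A ∪ (x +ᵥ B) ⊆ A + B :=
    union_subset (subset_add_left A hB) (vadd_finset_subset_add hx)
  rw [← card_vadd_finset x B, ← card_union_add_card_inter]
  gcongr

end FiniteGroup

section Residues

open Finset

variable {n : ℕ} {S U V X Y : Finset ℤ}

/-- The set of residue classes modulo `n` of the elements of `X`. -/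
def residues (n : ℕ) (X : Finset ℤ) : Finset (ZMod n) := X.image (↑)

lemma mem_residues {r : ZMod n} : r ∈ residues n X ↔ ∃ x ∈ X, (x : ZMod n) = r :=
  mem_image

lemma intCast_mem_residues {x : ℤ} (hx : x ∈ X) : (x : ZMod n) ∈ residues n X :=
  mem_image_of_mem _ hx

lemma residues_nonempty (hX : X.Nonempty) : (residues n X).Nonempty :=
  hX.image _

lemma residues_add (n : ℕ) (X Y : Finset ℤ) :
    residues n (X + Y) = residues n X + residues n Y :=
  image_add (Int.castAddHom (ZMod n))

lemma residues_union (n : ℕ) (X Y : Finset ℤ) :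
    residues n (X ∪ Y) = residues n X ∪ residues n Y :=
  image_union _ _

lemma residues_filter_mem (X : Finset ℤ) (P : Finset (ZMod n)) :
    residues n {x ∈ X | ((x : ℤ) : ZMod n) ∈ P} = residues n X ∩ P := by
  simp only [residues, ← filter_image (p := (· ∈ P)), filter_mem_eq_inter]

lemma residues_filter_notMem (X : Finset ℤ) (P : Finset (ZMod n)) :
    residues n {x ∈ X | ((x : ℤ) : ZMod n) ∉ P} = residues n X \ P := by
  simp only [residues, ← filter_image (p := (· ∉ P)), filter_notMem_eq_sdiff]

lemma card_residues_le (n : ℕ) (X : Finset ℤ) : #(residues n X) ≤ #X :=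
  card_image_le

lemma card_residues_of_abs_sub_lt (h : ∀ x ∈ X, ∀ y ∈ X, |x - y| < n) :
    #(residues n X) = #X := by
  refine card_image_of_injOn fun x hx y hy hxy ↦ ?_
  have hdvd : (n : ℤ) ∣ x - y := (ZMod.intCast_eq_intCast_iff_dvd_sub y x n).1 hxy.symm
  exact sub_eq_zero.1 (Int.eq_zero_of_abs_lt_dvd hdvd (h x hx y hy))

lemma card_residues_of_subset_Icc (hX : X ⊆ Icc 0 (n : ℤ)) (h : ¬ (0 ∈ X ∧ (n : ℤ) ∈ X)) :
    #(residues n X) = #X := by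
  refine card_residues_of_abs_sub_lt fun x hx y hy ↦ ?_
  have hx' := mem_Icc.1 (hX hx)
  have hy' := mem_Icc.1 (hX hy)
  by_contra! hxy
  apply h
  obtain ⟨rfl, rfl⟩ | ⟨rfl, rfl⟩ : (x = 0 ∧ y = n) ∨ (x = n ∧ y = 0) := by grind
  exacts [⟨hx, hy⟩, ⟨hy, hx⟩]

lemma card_residues_add_one [NeZero n] (hX : X ⊆ Icc 0 (n : ℤ)) (h0 : 0 ∈ X)
    (hn : (n : ℤ) ∈ X) : #(residues n X) + 1 = #X := by
  have hn0 : (0 : ℤ) ≠ n := Nat.cast_ne_zero.2 (NeZero.ne n) |>.symm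
  have hresidues : residues n X = residues n (X.erase n) := by
    conv_lhs => rw [residues, ← insert_erase hn, image_insert]
    refine insert_eq_of_mem (mem_residues.2 ⟨0, mem_erase.2 ⟨hn0, h0⟩, by simp⟩)
  rw [hresidues, card_residues_of_subset_Icc ((erase_subset _ _).trans hX) fun h ↦
    notMem_erase _ _ h.2, card_erase_add_one hn]

lemma card_le_card_residues_add_one [NeZero n] (hX : X ⊆ Icc 0 (n : ℤ)) :
    #X ≤ #(residues n X) + 1 := by
  by_cases h : 0 ∈ X ∧ (n : ℤ) ∈ X
  · exact (card_residues_add_one hX h.1 h.2).ge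
  · exact (card_residues_of_subset_Icc hX h).ge.trans (Nat.le_succ _)

lemma card_residues_add_card_le [NeZero n] (hYS : Y ⊆ S) (hnYS : (n : ℤ) +ᵥ Y ⊆ S) :
    #(residues n S) + #Y ≤ #S := by
  have hn : (0 : ℤ) < n := Nat.cast_pos.2 (NeZero.pos n)
  -- The least representative in `S` of a residue class is not in `n + Y`, since `Y ⊆ S`.
  have hsub : residues n S ⊆ residues n (S \ ((n : ℤ) +ᵥ Y)) := by
    intro r hr
    obtain ⟨z, hz, hzr⟩ := mem_residues.1 hr
    obtain ⟨w, hw, hmin⟩ := exists_min_image {w ∈ S | ((w : ℤ) : ZMod n) = r} id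
      ⟨z, mem_filter.2 ⟨hz, hzr⟩⟩
    rw [mem_filter] at hw
    refine mem_residues.2 ⟨w, mem_sdiff.2 ⟨hw.1, fun hwY ↦ ?_⟩, hw.2⟩
    obtain ⟨y, hy, rfl⟩ := mem_vadd_finset.1 hwY
    have hle : (n : ℤ) + y ≤ y := hmin y (mem_filter.2 ⟨hYS hy, by simpa using hw.2⟩)
    omega
  calc #(residues n S) + #Y ≤ #(S \ ((n : ℤ) +ᵥ Y)) + #((n : ℤ) +ᵥ Y) := by
        rw [card_vadd_finset]
        grw [hsub, card_residues_le]
    _ = #S := card_sdiff_add_card_eq_card hnYS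

lemma card_residues_sdiff_add_card_le [NeZero n] {P : Finset (ZMod n)} (hYS : Y ⊆ S)
    (hnYS : (n : ℤ) +ᵥ Y ⊆ S) (hYP : Disjoint (residues n Y) P) :
    #(residues n S \ P) + #Y ≤ #{z ∈ S | ((z : ℤ) : ZMod n) ∉ P} := by
  have hnotMem : ∀ y ∈ Y, (y : ZMod n) ∉ P := fun y hy ↦
    disjoint_left.1 hYP (intCast_mem_residues hy)
  rw [← residues_filter_notMem]
  refine card_residues_add_card_le (fun y hy ↦ mem_filter.2 ⟨hYS hy, hnotMem y hy⟩) fun z hz ↦ ?_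
  obtain ⟨y, hy, rfl⟩ := mem_vadd_finset.1 hz
  exact mem_filter.2 ⟨hnYS hz, by simpa using hnotMem y hy⟩

lemma card_residues_inter_add_card_residues_inter_le {P Q : Finset (ZMod n)}
    (hP : (residues n U ∩ P).Nonempty) (hQ : (residues n V ∩ Q).Nonempty) :
    #(residues n U ∩ P) + #(residues n V ∩ Q) ≤ #{z ∈ U + V | ((z : ℤ) : ZMod n) ∈ P + Q} + 1 := by
  rw [← residues_filter_mem] at hP hQ ⊢
  rw [← residues_filter_mem]
  set UP := {u ∈ U | ((u : ℤ) : ZMod n) ∈ P}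
  set VQ := {v ∈ V | ((v : ℤ) : ZMod n) ∈ Q}
  have hsub : UP + VQ ⊆ {z ∈ U + V | ((z : ℤ) : ZMod n) ∈ P + Q} := by
    intro z hz
    obtain ⟨u, hu, v, hv, rfl⟩ := mem_add.1 hz
    rw [mem_filter] at hu hv
    refine mem_filter.2 ⟨add_mem_add hu.1 hv.1, ?_⟩
    rw [Int.cast_add]
    exact add_mem_add hu.2 hv.2
  calc #(residues n UP) + #(residues n VQ) ≤ #UP + #VQ := by
        gcongr <;> exact card_residues_le _ _
    _ ≤ #(UP + VQ) + 1 := by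
        rw [← Nat.sub_le_iff_le_add]
        exact cauchy_davenport_add_of_linearOrder_isCancelAdd (image_nonempty.1 hP)
          (image_nonempty.1 hQ)
    _ ≤ _ := by gcongr

lemma ne_zero_of_subset_Icc_of_gcd_eq_one {m : ℤ} (hU : U ⊆ Icc 0 m) (hgcd : U.gcd id = 1) :
    m ≠ 0 := by
  rintro rfl
  have hgcd0 : U.gcd id = 0 := gcd_eq_zero_iff.2 fun u hu ↦ by simpa using hU hu
  omega

lemma closure_eq_top_of_gcd_eq_one (hU : U.gcd id = 1) :
    AddSubgroup.closure (U : Set ℤ) = ⊤ := by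
  obtain ⟨g, hg⟩ := Int.subgroup_cyclic (AddSubgroup.closure (U : Set ℤ))
  rw [← AddSubgroup.zmultiples_eq_closure] at hg
  have hdvd : g ∣ U.gcd id := dvd_gcd fun u hu ↦
    Int.mem_zmultiples_iff.1 (hg ▸ AddSubgroup.subset_closure hu)
  rw [hg, eq_top_iff]
  exact fun z _ ↦ Int.mem_zmultiples_iff.2 ((hU ▸ hdvd).trans (one_dvd z))

lemma closure_residues_eq_top (n : ℕ) (hU : U.gcd id = 1) :
    AddSubgroup.closure (residues n U : Set (ZMod n)) = ⊤ := by
  have hmap := AddMonoidHom.map_closure (Int.castAddHom (ZMod n)) (U : Set ℤ)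
  rw [closure_eq_top_of_gcd_eq_one hU, AddSubgroup.map_top_of_surjective _
    ZMod.intCast_surjective] at hmap
  rw [hmap, residues, coe_image]
  rfl

end Residues

section IntSumset

open Finset

variable {n : ℕ} [NeZero n] {U V : Finset ℤ}

lemma card_residues_add_card_residues_add_card_le (h0 : 0 ∈ U) (hn : (n : ℤ) ∈ U)
    (h : ¬ residues n (U + V) ⊆ residues n V + addStab (residues n (U + V))) :
    #(residues n U) + #(residues n V) + #V ≤ #(U + V) + 1 := by
  set A := residues n U with hA
  set B := residues n V with hB
  set H := addStab (residues n (U + V)) with hH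
  rw [residues_add, ← hA, ← hB] at h hH
  obtain ⟨r, hr, hrBH⟩ := not_subset.1 h
  have hH0 : 0 ∈ H := hH ▸ zero_mem_addStab ⟨r, hr⟩
  obtain ⟨a, ha, b, hb, rfl⟩ := mem_add.1 hr
  set K := (a + b) +ᵥ H with hK
  have hKsum : (a +ᵥ H) + (b +ᵥ H) = K := by
    rw [vadd_add_vadd_comm, hK, hH, addStab_add_addStab]
  have hBK : Disjoint B K := disjoint_left.2 fun c hcB hcK ↦ hrBH <| by
    obtain ⟨k, hk, rfl⟩ := mem_vadd_finset.1 hcK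
    have hmem := add_mem_add hcB (neg_mem_addStab (hH ▸ hk))
    rwa [vadd_eq_add, add_neg_cancel_right, ← hH] at hmem
  have hKAB : K ⊆ A + B := hK ▸ hH ▸ vadd_addStab_subset hr
  have houter : #((A + B) \ K) + #V ≤ #{z ∈ U + V | ((z : ℤ) : ZMod n) ∉ K} := by
    rw [hA, hB, ← residues_add]
    exact card_residues_sdiff_add_card_le (subset_add_right V h0) (vadd_finset_subset_add hn) hBK
  have hinner : #(A ∩ (a +ᵥ H)) + #(B ∩ (b +ᵥ H)) ≤
      #{z ∈ U + V | ((z : ℤ) : ZMod n) ∈ K} + 1 := hKsum ▸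
    card_residues_inter_add_card_residues_inter_le
      ⟨a, mem_inter.2 ⟨ha, mem_vadd_finset.2 ⟨0, hH0, add_zero a⟩⟩⟩
      ⟨b, mem_inter.2 ⟨hb, mem_vadd_finset.2 ⟨0, hH0, add_zero b⟩⟩⟩
  have hsplit := card_filter_add_card_filter_not (s := U + V) (fun z : ℤ ↦ (z : ZMod n) ∈ K)
  have hkneser : #(A + H) + #(B + H) ≤ #(A + B) + #H := hH ▸ kneser ⟨a, ha⟩ ⟨b, hb⟩
  have hAH := card_add_card_le_of_zero_mem ha hH0
  have hBH := card_add_card_le_of_zero_mem hb hH0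
  have hdiff : #((A + B) \ K) + #H = #(A + B) := by
    rw [← card_vadd_finset (a + b) H, card_sdiff_add_card_eq_card hKAB]
  omega

lemma residues_add_eq_univ (hV : V.Nonempty) (hgcd : U.gcd id = 1)
    (h : residues n (U + V) ⊆ residues n V + addStab (residues n (U + V))) :
    residues n (U + V) = univ := by
  set H := addStab (residues n (U + V)) with hH
  have hHH : H + H = H := addStab_add_addStab _
  have hU : U.Nonempty := nonempty_iff_ne_empty.2 <| by rintro rfl; simp at hgcd
  have hHne : H.Nonempty := ⟨0, zero_mem_addStab (residues_nonempty (hU.add hV))⟩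
  have hBH : residues n V + H = univ := by
    refine eq_univ_of_add_subset (closure_residues_eq_top n hgcd)
      ((residues_nonempty hV).add hHne) ?_
    calc residues n U + (residues n V + H) = residues n (U + V) + H := by
          rw [← add_assoc, residues_add]
      _ ⊆ residues n V + H + H := add_subset_add_right h
      _ = residues n V + H := by rw [add_assoc, hHH]
  rw [← add_addStab (residues n (U + V)), ← hH, residues_add, add_assoc, hBH]
  exact add_eq_univ_of_card_lt <| by
    rw [card_univ]
    exact Nat.lt_add_of_pos_left (residues_nonempty hU).card_pos

lemma add_card_le_of_residues_add_eq_univ (h0 : 0 ∈ U) (hn : (n : ℤ) ∈ U)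
    (h : residues n (U + V) = univ) : n + #V ≤ #(U + V) := by
  have hcount : #(residues n (U + V)) + #V ≤ #(U + V) :=
    card_residues_add_card_le (subset_add_right V h0) (vadd_finset_subset_add hn)
  rwa [h, card_univ, ZMod.card] at hcount

theorem min_le_card_add (hV : V.Nonempty) (h0 : 0 ∈ U) (hn : (n : ℤ) ∈ U)
    (hgcd : U.gcd id = 1) :
    min (n + #V) (#(residues n U) + #(residues n V) + #V - 1) ≤ #(U + V) := by
  by_cases h : residues n (U + V) ⊆ residues n V + addStab (residues n (U + V))
  · exact min_le_of_left_le <|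
      add_card_le_of_residues_add_eq_univ h0 hn (residues_add_eq_univ hV hgcd h)
  · exact min_le_of_right_le <| Nat.sub_le_of_le_add <|
      card_residues_add_card_residues_add_card_le h0 hn h

theorem add_card_le_card_add_of_not_subset (hU : U ⊆ Icc 0 (n : ℤ)) (hV : V ⊆ Icc 0 (n : ℤ))
    (h0 : 0 ∈ U) (hn : (n : ℤ) ∈ U) (hUV : ¬ U ⊆ V) (hcard : n + 2 = #U + #V) :
    n + #V ≤ #(U + V) := by
  have hUcard := card_residues_add_one hU h0 hn
  have hG : Fintype.card (ZMod n) = n := ZMod.card n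
  by_cases hends : 0 ∈ V ∧ (n : ℤ) ∈ V
  · have hVcard := card_residues_add_one hV hends.1 hends.2
    have hunion_card := card_residues_add_one (union_subset hU hV) (mem_union_left _ h0)
      (mem_union_left _ hn)
    rw [residues_union, ← card_sdiff_add_card] at hunion_card
    have hlt : #V < #(U ∪ V) := card_lt_card
      ⟨subset_union_right, fun h ↦ hUV (subset_union_left.trans h)⟩
    have hnot_subset : ¬ residues n U ⊆ residues n V := fun h ↦ by
      rw [sdiff_eq_empty_iff_subset.2 h, card_empty] at hunion_card
      omega
    have hmissing := card_compl_add_le_card_sdiff (by omega) hnot_subset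
    rw [← residues_add, card_compl] at hmissing
    -- `U + V` contains both `U ∪ V` and `n + (U ∪ V)`, as `0` and `n` lie in `U` and in `V`.
    have hcount : #(residues n (U + V)) + #(U ∪ V) ≤ #(U + V) := by
      refine card_residues_add_card_le
        (union_subset (subset_add_left U hends.1) (subset_add_right V h0)) ?_
      rw [vadd_finset_union]
      exact union_subset (add_comm V U ▸ vadd_finset_subset_add hends.2)
        (vadd_finset_subset_add hn)
    omega
  · have hVcard := card_residues_of_subset_Icc hV hends
    refine add_card_le_of_residues_add_eq_univ h0 hn ?_
    rw [residues_add]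
    exact add_eq_univ_of_card_lt (by omega)

end IntSumset

theorem sumset_lower_bound_subset_general (U V : Finset ℤ) (hV : V.Nonempty) (uS : ℤ)
    (hUI : U ⊆ Finset.Icc 0 uS) (hVI : V ⊆ Finset.Icc 0 uS) (h0 : 0 ∈ U) (huS : uS ∈ U)
    (hgcd : U.gcd id = 1) :
    min (uS + V.card) ((U.card : ℤ) + 2 * V.card - 3) ≤ ((U + V).card : ℤ) ∧
      (¬ U ⊆ V → uS = (U.card : ℤ) + V.card - 2 → uS + V.card ≤ ((U + V).card : ℤ)) := by
  obtain ⟨n, rfl⟩ := Int.eq_ofNat_of_zero_le (Finset.mem_Icc.1 (hUI huS)).1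
  have : NeZero n := ⟨mod_cast ne_zero_of_subset_Icc_of_gcd_eq_one hUI hgcd⟩
  constructor
  · have hUcard := card_residues_add_one hUI h0 huS
    have hVcard := card_le_card_residues_add_one hVI
    have hmin := min_le_card_add hV h0 huS hgcd
    omega
  · intro hUV hcard
    exact_mod_cast add_card_le_card_add_of_not_subset hUI hVI h0 huS hUV (by omega)

theorem sumset_lower_bound_subset (U V : Finset ℤ) (hV : V.Nonempty)
    (hVU : V ⊆ U) (h0 : 0 ∈ U) (hpos : ∀ u ∈ U, 0 ≤ u)
    (uS : ℤ) (huS : uS ∈ U) (huSmax : ∀ u ∈ U, u ≤ uS)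
    (hgcd : U.gcd id = 1) :
    min (uS + V.card) ((U.card : ℤ) + 2 * V.card - 3) ≤ ((U + V).card : ℤ) ∧
      (U ≠ V → uS = (U.card : ℤ) + V.card - 2 → uS + V.card ≤ ((U + V).card : ℤ)) := by
  have hU : U ⊆ Finset.Icc 0 uS := fun u hu ↦ Finset.mem_Icc.2 ⟨hpos u hu, huSmax u hu⟩
  exact (sumset_lower_bound_subset_general U V hV uS hU (hVU.trans hU) h0 huS hgcd).imp_right
    fun h hne ↦ h fun hUV ↦ hne (hUV.antisymm hVU)
end

section
/- Let s ≥ 2 and A' = {0 = a_1 < a_2 < ... < a_s} be a finite set of nonnegative integers with a_1 = 0 and gcd of its nonzero elements equal to 1. Let R = min(a_s - s + 3, s). Then |A'+A'| ≥ 2s + R - 3. -/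
open Pointwise

/-!
Let `A ⊆ [l, r]` contain both endpoints. By the pigeonhole principle `l + t` is a sum of two
elements of `A` as soon as `A` fills more than half of `[l, t]`, and symmetrically for `t + r`. If
`r - l ≤ 2 * #A - 3`, each `t` in `[l, r]` is covered by one of the two, and by both if `t ∈ A`,
which gives `#(A + A) ≥ r - l + #A`.

If `r - l ≥ 2 * #A - 3`, we show `#(A + A) ≥ 3 * #A - 3` by induction on `#A`. Suppose first that
some interior `c ∈ A` cuts `A` into sparse halves `X`, `Y` sharing `c`. If `c + 1 ∉ A`, the sumsets
`X + X` and `Y + Y` meet only in `2 * c`, so the induction hypothesis leaves us one sum short, and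
that sum is found in `X + Y`; a half lying in a proper residue class, to which the induction does
not apply, is compensated by many more sums in `X + Y`. If `c + 1 ∈ A`, we let the halves overlap in
`{c, c + 1}`; this makes them primitive, and their sumsets share at most three elements.

If no element cuts `A`, the walk `t - l + 2 - 2 * #{a ∈ A | a ≤ t}` has a last zero `u` such that
`P = {a ∈ A | a ≤ u}` is dense seen from `l` and `Q = {a ∈ A | u < a}` is dense seen from `r`. Then
`A + A` contains three disjoint sets: an interval of length `2 * #P - 1`, the sumset `P + Q`, and an
interval of length `2 * #Q - 1`.
-/

open Finset

theorem add_mem_add_self_of_card_Icc_lt {α : Type*} [AddCommGroup α] [PartialOrder α]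
    [IsOrderedAddMonoid α] [LocallyFiniteOrder α] [DecidableEq α] {B : Finset α} {l r : α}
    (hB : B ⊆ Icc l r) (hcard : #(Icc l r) < 2 * #B) : l + r ∈ B + B := by
  have hreflect : B.image (l + r - ·) ⊆ Icc l r := image_subset_iff.2 fun b hb ↦ by
    obtain ⟨hlb, hbr⟩ := mem_Icc.1 (hB hb)
    exact mem_Icc.2 ⟨le_sub_iff_add_le.2 (by gcongr), sub_le_iff_le_add'.2 (by gcongr)⟩
  have hne : (B ∩ B.image (l + r - ·)).Nonempty := by
    apply inter_nonempty_of_card_lt_card_add_card hB hreflect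
    rwa [card_image_of_injective _ sub_right_injective, ← two_mul]
  obtain ⟨a, ha⟩ := hne
  obtain ⟨haB, b, hb, rfl⟩ := by simpa only [mem_inter, mem_image] using ha
  exact mem_add.2 ⟨l + r - b, haB, b, hb, sub_add_cancel _ _⟩

theorem filter_le_union_filter_ge {α : Type*} [LinearOrder α] (A : Finset α) {s t : α}
    (hst : s ≤ t) : {a ∈ A | a ≤ t} ∪ {a ∈ A | s ≤ a} = A := by
  rw [← filter_or]
  exact filter_true_of_mem fun a _ ↦ (le_total a t).imp_right hst.trans

theorem card_filter_le_add_card_filter_ge {α : Type*} [LinearOrder α] {A : Finset α} {c : α}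
    (hc : c ∈ A) : #{a ∈ A | a ≤ c} + #{a ∈ A | c ≤ a} = #A + 1 := by
  have hinter : {a ∈ A | a ≤ c} ∩ {a ∈ A | c ≤ a} = {c} := by
    ext a
    simp only [mem_inter, mem_filter, mem_singleton]
    exact ⟨fun h ↦ le_antisymm h.1.2 h.2.2, by rintro rfl; simp [hc]⟩
  rw [← card_union_add_card_inter, filter_le_union_filter_ge A le_rfl, hinter, card_singleton]

theorem card_filter_lt_add_card_filter_ge {α : Type*} [LinearOrder α] (A : Finset α) (c : α) :
    #{a ∈ A | a < c} + #{a ∈ A | c ≤ a} = #A := by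
  simpa only [not_lt] using A.card_filter_add_card_filter_not (· < c)

theorem card_filter_le_add_card_filter_gt {α : Type*} [LinearOrder α] (A : Finset α) (c : α) :
    #{a ∈ A | a ≤ c} + #{a ∈ A | c < a} = #A := by
  simpa only [not_le] using A.card_filter_add_card_filter_not (· ≤ c)

theorem card_filter_le_add_one_of_mem {A : Finset ℤ} {t : ℤ} (h : t + 1 ∈ A) :
    #{a ∈ A | a ≤ t + 1} = #{a ∈ A | a ≤ t} + 1 := by
  have hinsert : {a ∈ A | a ≤ t + 1} = insert (t + 1) {a ∈ A | a ≤ t} := by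
    ext a
    simp only [mem_filter, mem_insert]
    grind
  rw [hinsert, card_insert_of_notMem (by simp)]

theorem left_add_mem_add_self {A : Finset ℤ} {l t : ℤ} (hA : ∀ a ∈ A, l ≤ a)
    (hcard : t - l + 1 < 2 * (#{a ∈ A | a ≤ t} : ℤ)) (ht : l ≤ t) : l + t ∈ A + A := by
  have hsub : {a ∈ A | a ≤ t} ⊆ Icc l t := fun a ha ↦
    mem_Icc.2 ⟨hA a (mem_filter.1 ha).1, (mem_filter.1 ha).2⟩
  refine add_subset_add (filter_subset _ _) (filter_subset _ _)
    (add_mem_add_self_of_card_Icc_lt hsub ?_)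
  rw [Int.card_Icc]
  omega

theorem add_right_mem_add_self {A : Finset ℤ} {r t : ℤ} (hA : ∀ a ∈ A, a ≤ r)
    (hcard : r - t + 1 < 2 * (#{a ∈ A | t ≤ a} : ℤ)) (ht : t ≤ r) : t + r ∈ A + A := by
  have hsub : {a ∈ A | t ≤ a} ⊆ Icc t r := fun a ha ↦
    mem_Icc.2 ⟨(mem_filter.1 ha).2, hA a (mem_filter.1 ha).1⟩
  refine add_subset_add (filter_subset _ _) (filter_subset _ _)
    (add_mem_add_self_of_card_Icc_lt hsub ?_)
  rw [Int.card_Icc]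
  omega

theorem left_add_mem_or_add_right_mem {A : Finset ℤ} {l r : ℤ} (hA : A ⊆ Icc l r)
    (hdense : r - l ≤ 2 * (#A : ℤ) - 3) {t : ℤ} (ht : t ∈ Icc l r) :
    l + t ∈ A + A ∨ t + r ∈ A + A := by
  obtain ⟨hlt, htr⟩ := mem_Icc.1 ht
  by_contra! h
  have hlow : 2 * (#{a ∈ A | a ≤ t} : ℤ) ≤ t - l + 1 := not_lt.1 fun hcard ↦
    h.1 (left_add_mem_add_self (fun a ha ↦ (mem_Icc.1 (hA ha)).1) hcard hlt)
  have hhigh : 2 * (#{a ∈ A | t ≤ a} : ℤ) ≤ r - t + 1 := not_lt.1 fun hcard ↦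
    h.2 (add_right_mem_add_self (fun a ha ↦ (mem_Icc.1 (hA ha)).2) hcard htr)
  have hcount : #A ≤ #{a ∈ A | a ≤ t} + #{a ∈ A | t ≤ a} := by
    rw [← card_filter_lt_add_card_filter_ge A t]
    gcongr with a
    exact le_of_lt
  omega

theorem sub_add_card_le_card_add_self {A : Finset ℤ} {l r : ℤ} (hl : l ∈ A) (hr : r ∈ A)
    (hA : A ⊆ Icc l r) (hdense : r - l ≤ 2 * (#A : ℤ) - 3) :
    r - l + #A ≤ (#(A + A) : ℤ) := by
  set P := {t ∈ Icc l r | l + t ∈ A + A} with hP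
  set Q := {t ∈ Icc l r | t + r ∈ A + A} with hQ
  have hinter : A ⊆ P ∩ Q := fun a ha ↦
    mem_inter.2 ⟨mem_filter.2 ⟨hA ha, add_mem_add hl ha⟩, mem_filter.2 ⟨hA ha, add_mem_add ha hr⟩⟩
  have hunion : Icc l r ⊆ P ∪ Q := by
    rw [hP, hQ, ← filter_or]
    exact fun t ht ↦ mem_filter.2 ⟨ht, left_add_mem_or_add_right_mem hA hdense ht⟩
  have hoverlap : P.image (l + ·) ∩ Q.image (· + r) ⊆ {l + r} := by
    intro z hz
    simp only [mem_inter, mem_image, hP, hQ, mem_filter, mem_Icc] at hz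
    rw [mem_singleton]
    omega
  have hsub : P.image (l + ·) ∪ Q.image (· + r) ⊆ A + A :=
    union_subset (image_subset_iff.2 fun t ht ↦ (mem_filter.1 ht).2)
      (image_subset_iff.2 fun t ht ↦ (mem_filter.1 ht).2)
  have hPQ := card_union_add_card_inter P Q
  have hsums := card_union_add_card_inter (P.image (l + ·)) (Q.image (· + r))
  rw [card_image_of_injective _ (add_right_injective l),
    card_image_of_injective _ (add_left_injective r)] at hsums
  have hinter := card_le_card hinter
  have hunion := card_le_card hunion
  have hoverlap := card_le_card hoverlap
  have hsub := card_le_card hsub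
  rw [Int.card_Icc] at hunion
  rw [card_singleton] at hoverlap
  omega

/-! ### Sparse sets without a cut -/

-- A walk that is positive before `u`, or falls back after `u`, would descend through the values
-- `0, …, h s - 1`, which `hdescent` forbids.
theorem exists_last_zero_of_no_small_descent {h : ℤ → ℤ} {l s : ℤ}
    (hstep : ∀ t, h (t + 1) = h t + 1 ∨ h (t + 1) = h t - 1) (hls : l ≤ s) (hl : h l ≤ 0)
    (hs : 0 < h s)
    (hdescent : ∀ t ∈ Ico l s, h (t + 1) = h t - 1 → h (t + 1) < 0 ∨ h s ≤ h (t + 1)) :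
    ∃ u ∈ Ico l s, h u = 0 ∧ (∀ t ∈ Icc l u, h t ≤ 0) ∧ ∀ t ∈ Ioc u s, t - u ≤ h t ∨ h s ≤ h t := by
  obtain ⟨u, ⟨hus, hu⟩, hmax⟩ :=
    Int.exists_greatest_of_bdd (P := fun t ↦ t ≤ s ∧ h t ≤ 0) ⟨s, fun t ht ↦ ht.1⟩ ⟨l, hls, hl⟩
  have hlu : l ≤ u := hmax l ⟨hls, hl⟩
  have hus' : u < s := lt_of_le_of_ne hus fun heq ↦ by subst heq; omega
  have habove : ∀ t ∈ Ioc u s, 0 < h t := fun t ht ↦ by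
    obtain ⟨hut, hts⟩ := mem_Ioc.1 ht
    by_contra! hle
    exact hut.not_ge (hmax t ⟨hts, hle⟩)
  have hu' := habove (u + 1) (mem_Ioc.2 ⟨by omega, by omega⟩)
  have hu0 : h u = 0 := by have := hstep u; omega
  have hbelow : ∀ t ≤ u, l ≤ t → h t ≤ 0 := by
    refine Int.leInductionDown (fun _ ↦ hu) fun t htu ih hlt ↦ ?_
    have := hdescent (t - 1) (mem_Ico.2 ⟨hlt, by omega⟩)
    have := hstep (t - 1)
    rw [sub_add_cancel] at *
    omega
  have hascent : ∀ t, u + 1 ≤ t → t ≤ s → t - u ≤ h t ∨ h s ≤ h t := by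
    refine Int.leInduction (fun _ ↦ by omega) fun t hut ih hts ↦ ?_
    have := hdescent t (mem_Ico.2 ⟨by omega, by omega⟩)
    have := hstep t
    have := habove (t + 1) (mem_Ioc.2 ⟨by omega, hts⟩)
    omega
  exact ⟨u, mem_Ico.2 ⟨hlu, hus'⟩, hu0, fun t ht ↦ hbelow t (mem_Icc.1 ht).2 (mem_Icc.1 ht).1,
    fun t ht ↦ hascent t (mem_Ioc.1 ht).1 (mem_Ioc.1 ht).2⟩

/-- How far `A` is from filling half of `[l, t]`. As a function of `t` it is a walk with steps
`±1`, stepping down at the elements of `A`; the offset `2` makes the value at a smallest element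
`l` of `A` equal to `0`. -/
def deficit (A : Finset ℤ) (l t : ℤ) : ℤ :=
  t - l + 2 - 2 * #{a ∈ A | a ≤ t}

theorem deficit_add_one_of_mem {A : Finset ℤ} {l t : ℤ} (h : t + 1 ∈ A) :
    deficit A l (t + 1) = deficit A l t - 1 := by
  rw [deficit, deficit, card_filter_le_add_one_of_mem h]
  omega

theorem deficit_add_one_of_notMem {A : Finset ℤ} {l t : ℤ} (h : t + 1 ∉ A) :
    deficit A l (t + 1) = deficit A l t + 1 := by
  have hfilter : {a ∈ A | a ≤ t + 1} = {a ∈ A | a ≤ t} := filter_congr fun a ha ↦ by grind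
  rw [deficit, deficit, hfilter]
  omega

theorem deficit_left_nonpos {A : Finset ℤ} {l : ℤ} (hl : l ∈ A) : deficit A l l ≤ 0 := by
  have : 0 < #{a ∈ A | a ≤ l} := card_pos.2 ⟨l, mem_filter.2 ⟨hl, le_rfl⟩⟩
  rw [deficit]
  omega

theorem deficit_right_sub_one {A : Finset ℤ} {l r : ℤ} (hr : r ∈ A) (hA : ∀ a ∈ A, a ≤ r) :
    deficit A l (r - 1) = r - l + 3 - 2 * #A := by
  have hfilter : {a ∈ A | a ≤ r - 1} = A.erase r := by
    ext a
    simp only [mem_filter, mem_erase]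
    exact ⟨fun h ↦ ⟨by omega, h.1⟩, fun h ↦ ⟨h.2, by have := hA a h.2; omega⟩⟩
  have hcard := card_erase_add_one hr
  rw [deficit, hfilter]
  omega

/-- An interior element `c` of `A ⊆ [l, r]` splitting `A` into two parts that share `c` and are both
sparse, where a set in `[l, r]` is sparse if `r - l ≥ 2 * #A - 2`. -/
def IsCut (A : Finset ℤ) (l r c : ℤ) : Prop :=
  c ∈ A ∧ l < c ∧ c < r ∧
    2 * (#{a ∈ A | a ≤ c} : ℤ) - 2 ≤ c - l ∧ 2 * (#{a ∈ A | c ≤ a} : ℤ) - 2 ≤ r - c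

theorem deficit_lt_zero_or_le_of_not_isCut {A : Finset ℤ} {l r c : ℤ} (hcA : c ∈ A) (hlc : l < c)
    (hcr : c < r) (hc : ¬ IsCut A l r c) :
    deficit A l c < 0 ∨ r - l + 3 - 2 * #A ≤ deficit A l c := by
  have hcard := card_filter_le_add_card_filter_ge hcA
  by_contra! hnot
  rw [deficit] at hnot
  exact hc ⟨hcA, hlc, hcr, by omega, by omega⟩

theorem exists_threshold_of_forall_not_isCut {A : Finset ℤ} {l r : ℤ} (hl : l ∈ A) (hr : r ∈ A)
    (hA : ∀ a ∈ A, a ≤ r) (hlr : l < r) (hsparse : 2 * (#A : ℤ) - 2 ≤ r - l)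
    (hcut : ∀ c, ¬ IsCut A l r c) :
    ∃ u ∈ Ico l r, 2 * (#{a ∈ A | a ≤ u} : ℤ) = u - l + 2 ∧
      (∀ t ∈ Icc l u, t - l + 1 < 2 * (#{a ∈ A | a ≤ t} : ℤ)) ∧
      ∀ t ∈ Icc (r + 2 - 2 * (#{a ∈ A | u < a} : ℤ)) r,
        r - t + 1 < 2 * (#{a ∈ A | t ≤ a} : ℤ) := by
  have hend := deficit_right_sub_one (l := l) hr hA
  obtain ⟨u, hulr, hu, hlow, hhigh⟩ := exists_last_zero_of_no_small_descent (h := deficit A l)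
    (s := r - 1)
    (fun t ↦ (em (t + 1 ∈ A)).symm.imp deficit_add_one_of_notMem deficit_add_one_of_mem)
    (by omega) (deficit_left_nonpos hl) (by omega) fun t ht hdown ↦ by
      obtain ⟨hlt, htr⟩ := mem_Ico.1 ht
      have hmem : t + 1 ∈ A := by
        by_contra hnot
        have := deficit_add_one_of_notMem (l := l) hnot
        omega
      rw [hend]
      exact deficit_lt_zero_or_le_of_not_isCut hmem (by omega) (by omega) (hcut _)
  simp only [deficit] at hu hlow hhigh hend
  rw [mem_Ico] at hulr
  refine ⟨u, mem_Ico.2 ⟨hulr.1, by omega⟩, by omega, fun t ht ↦ ?_, fun t ht ↦ ?_⟩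
  · have := hlow t ht
    omega
  obtain ⟨htr, hrt⟩ := mem_Icc.1 ht
  have hcompl := card_filter_le_add_card_filter_gt A u
  have hcard := card_filter_lt_add_card_filter_ge A t
  have hpred : {a ∈ A | a < t} = {a ∈ A | a ≤ t - 1} :=
    filter_congr fun a _ ↦ Int.le_sub_one_iff.symm
  rw [hpred] at hcard
  have := hhigh (t - 1) (mem_Ioc.2 ⟨by omega, by omega⟩)
  omega

theorem card_Icc_add_card_add_card_Icc_le {α : Type*} [LinearOrder α] [LocallyFiniteOrder α]
    {S M : Finset α} {a b c d : α} (hbot : Icc a b ⊆ S) (hM : M ⊆ S) (htop : Icc c d ⊆ S)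
    (hbetween : M ⊆ Ioo b c) (hbc : b < c) :
    #(Icc a b) + #M + #(Icc c d) ≤ #S := by
  have hbotM : Disjoint (Icc a b) M := disjoint_left.2 fun z hz hz' ↦
    (mem_Ioo.1 (hbetween hz')).1.not_ge (mem_Icc.1 hz).2
  have hrest : Disjoint (Icc a b ∪ M) (Icc c d) := disjoint_union_left.2
    ⟨disjoint_left.2 fun z hz hz' ↦
      ((mem_Icc.1 hz).2.trans_lt hbc).not_ge (mem_Icc.1 hz').1,
    disjoint_left.2 fun z hz hz' ↦ (mem_Ioo.1 (hbetween hz)).2.not_ge (mem_Icc.1 hz').1⟩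
  rw [← card_union_of_disjoint hbotM, ← card_union_of_disjoint hrest]
  exact card_le_card (union_subset (union_subset hbot hM) htop)

theorem three_mul_card_le_of_forall_not_isCut {A : Finset ℤ} {l r : ℤ} (hl : l ∈ A)
    (hr : r ∈ A) (hA : A ⊆ Icc l r) (hlr : l < r) (hsparse : 2 * (#A : ℤ) - 2 ≤ r - l)
    (hcut : ∀ c, ¬ IsCut A l r c) : 3 * #A ≤ #(A + A) + 3 := by
  have hAl : ∀ a ∈ A, l ≤ a := fun a ha ↦ (mem_Icc.1 (hA ha)).1
  have hAr : ∀ a ∈ A, a ≤ r := fun a ha ↦ (mem_Icc.1 (hA ha)).2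
  obtain ⟨u, hulr, hu, hlow, hhigh⟩ :=
    exists_threshold_of_forall_not_isCut hl hr hAr hlr hsparse hcut
  obtain ⟨hlu, hur⟩ := mem_Ico.1 hulr
  have hcompl := card_filter_le_add_card_filter_gt A u
  set P := {a ∈ A | a ≤ u}
  set Q := {a ∈ A | u < a}
  set v := r + 2 - 2 * (#Q : ℤ)
  have hbottom : Icc (l + l) (l + u) ⊆ A + A := fun z hz ↦ by
    obtain ⟨hlz, hzu⟩ := mem_Icc.1 hz
    simpa only [add_sub_cancel] using left_add_mem_add_self hAl
      (hlow (z - l) (mem_Icc.2 ⟨by omega, by omega⟩)) (by omega)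
  have htop : Icc (v + r) (r + r) ⊆ A + A := fun z hz ↦ by
    obtain ⟨hvz, hzr⟩ := mem_Icc.1 hz
    simpa only [sub_add_cancel] using add_right_mem_add_self hAr
      (hhigh (z - r) (mem_Icc.2 ⟨by omega, by omega⟩)) (by omega)
  have hcross : P + Q ⊆ A + A := add_subset_add (filter_subset _ _) (filter_subset _ _)
  have hbetween : P + Q ⊆ Ioo (l + u) (v + r) := add_subset_iff.2 fun a ha b hb ↦ by
    have := hAl a (mem_filter.1 ha).1
    have := (mem_filter.1 ha).2
    have := hAr b (mem_filter.1 hb).1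
    have := (mem_filter.1 hb).2
    exact mem_Ioo.2 ⟨by omega, by omega⟩
  have hcross_card : #P + #Q - 1 ≤ #(P + Q) := cauchy_davenport_add_of_linearOrder_isCancelAdd
    ⟨l, mem_filter.2 ⟨hl, hlu⟩⟩ ⟨r, mem_filter.2 ⟨hr, hur⟩⟩
  have hblocks := card_Icc_add_card_add_card_Icc_le hbottom hcross htop hbetween (by omega)
  rw [Int.card_Icc, Int.card_Icc] at hblocks
  omega

/-! ### Sums across a cut -/

/-- `A` lies in a single residue class only for moduli `±1`. For sets containing `0` this says that
the greatest common divisor of the elements is `1`, but it is invariant under translation. -/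
def IsPrimitive (A : Finset ℤ) : Prop :=
  ∀ d : ℤ, (∀ a ∈ A, ∀ b ∈ A, a ≡ b [ZMOD d]) → IsUnit d

theorem isPrimitive_iff_of_mem {A : Finset ℤ} {c : ℤ} (hc : c ∈ A) :
    IsPrimitive A ↔ ∀ d : ℤ, (∀ a ∈ A, a ≡ c [ZMOD d]) → IsUnit d :=
  forall_congr' fun _ ↦ imp_congr_left
    ⟨fun h a ha ↦ h a ha c hc, fun h a ha b hb ↦ (h a ha).trans (h b hb).symm⟩

theorem exists_forall_modEq_of_not_isPrimitive {A : Finset ℤ} {c : ℤ} (hc : c ∈ A)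
    (hA : ¬ IsPrimitive A) : ∃ d : ℤ, ¬ IsUnit d ∧ ∀ a ∈ A, a ≡ c [ZMOD d] := by
  simpa only [isPrimitive_iff_of_mem hc, not_forall, exists_prop, and_comm] using hA

theorem isPrimitive_of_mem_of_add_one_mem {A : Finset ℤ} {c : ℤ} (hc : c ∈ A) (hc' : c + 1 ∈ A) :
    IsPrimitive A := fun d h ↦ by
  have hdvd : d ∣ c + 1 - c := (h c hc (c + 1) hc').dvd
  rw [add_sub_cancel_left] at hdvd
  exact isUnit_of_dvd_one hdvd

/-- The sums of an element of `X` and an element of `Y` that neither `X` nor `Y` produces alone. -/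
def crossSums {α : Type*} [Add α] [DecidableEq α] (X Y : Finset α) : Finset α :=
  (X + Y) \ ((X + X) ∪ (Y + Y))

theorem mem_crossSums {α : Type*} [Add α] [DecidableEq α] {X Y : Finset α} {z : α} :
    z ∈ crossSums X Y ↔ z ∈ X + Y ∧ z ∉ X + X ∧ z ∉ Y + Y := by
  rw [crossSums, mem_sdiff, mem_union, not_or]

theorem card_add_self_add_card_add_self_add_card_crossSums_le {α : Type*} [AddCommMonoid α]
    [PartialOrder α] [IsOrderedAddMonoid α] [LocallyFiniteOrder α] [DecidableEq α]
    {X Y : Finset α} {a b : α} (hX : ∀ x ∈ X, x ≤ b) (hY : ∀ y ∈ Y, a ≤ y) :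
    #(X + X) + #(Y + Y) + #(crossSums X Y) ≤ #((X ∪ Y) + (X ∪ Y)) + #(Icc (a + a) (b + b)) := by
  have hinter : (X + X) ∩ (Y + Y) ⊆ Icc (a + a) (b + b) := fun z hz ↦ by
    obtain ⟨hzX, hzY⟩ := mem_inter.1 hz
    obtain ⟨x, hx, x', hx', rfl⟩ := mem_add.1 hzX
    obtain ⟨y, hy, y', hy', hyz⟩ := mem_add.1 hzY
    exact mem_Icc.2
      ⟨hyz ▸ add_le_add (hY y hy) (hY y' hy'), add_le_add (hX x hx) (hX x' hx')⟩
  have hsub : (X + X) ∪ (Y + Y) ∪ crossSums X Y ⊆ (X ∪ Y) + (X ∪ Y) :=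
    union_subset (union_subset (add_subset_add subset_union_left subset_union_left)
      (add_subset_add subset_union_right subset_union_right))
      (sdiff_subset.trans (add_subset_add subset_union_left subset_union_right))
  calc #(X + X) + #(Y + Y) + #(crossSums X Y)
      = #((X + X) ∪ (Y + Y) ∪ crossSums X Y) + #((X + X) ∩ (Y + Y)) := by
        rw [crossSums, card_union_of_disjoint disjoint_sdiff, ← card_union_add_card_inter]
        ring
    _ ≤ _ := add_le_add (card_le_card hsub) (card_le_card hinter)

theorem add_notMem_add_self_of_modEq {B : Finset ℤ} {c d x y : ℤ}
    (hB : ∀ b ∈ B, b ≡ c [ZMOD d]) (hx : ¬ x ≡ c [ZMOD d]) (hy : y ≡ c [ZMOD d]) :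
    x + y ∉ B + B := fun h ↦ by
  obtain ⟨u, hu, v, hv, huv⟩ := mem_add.1 h
  exact hx (hy.add_right_cancel (huv ▸ (hB u hu).add (hB v hv)))

theorem exists_isGreatest_of_not_forall {α : Type*} [LinearOrder α] {B : Finset α} {p : α → Prop}
    (h : ¬ ∀ b ∈ B, p b) : ∃ b₀, IsGreatest {b | b ∈ B ∧ ¬ p b} b₀ := by
  classical
  have hne : {b ∈ B | ¬ p b}.Nonempty := by
    simpa only [filter_nonempty_iff, not_forall, exists_prop] using h
  exact ⟨_, by simpa only [coe_filter] using isGreatest_max' _ hne⟩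

theorem exists_isLeast_of_not_forall {α : Type*} [LinearOrder α] {B : Finset α} {p : α → Prop}
    (h : ¬ ∀ b ∈ B, p b) : ∃ b₀, IsLeast {b | b ∈ B ∧ ¬ p b} b₀ :=
  exists_isGreatest_of_not_forall (α := αᵒᵈ) h

theorem add_notMem_add_self_of_isGreatest {X : Finset ℤ} {c d x₀ y : ℤ} (hX : ∀ x ∈ X, x ≤ c)
    (hx₀ : IsGreatest {x | x ∈ X ∧ ¬ x ≡ c [ZMOD d]} x₀) (hcy : c < y) (hy : y ≡ c [ZMOD d]) :
    x₀ + y ∉ X + X := fun hsum ↦ by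
  have habove : ∀ x ∈ {x ∈ X | x₀ < x}, x ≡ c [ZMOD d] := fun x hx ↦ by
    obtain ⟨hxX, hlt⟩ := mem_filter.1 hx
    by_contra hxc
    exact hlt.not_ge (hx₀.2 ⟨hxX, hxc⟩)
  refine add_notMem_add_self_of_modEq habove hx₀.1.2 hy ?_
  obtain ⟨u, hu, v, hv, huv⟩ := mem_add.1 hsum
  have := hX u hu
  have := hX v hv
  exact mem_add.2 ⟨u, mem_filter.2 ⟨hu, by omega⟩, v, mem_filter.2 ⟨hv, by omega⟩, huv⟩

theorem add_notMem_add_self_of_isLeast {Y : Finset ℤ} {c d x y₀ : ℤ} (hY : ∀ y ∈ Y, c ≤ y)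
    (hy₀ : IsLeast {y | y ∈ Y ∧ ¬ y ≡ c [ZMOD d]} y₀) (hxc : x < c) (hx : x ≡ c [ZMOD d]) :
    y₀ + x ∉ Y + Y := fun hsum ↦ by
  have hbelow : ∀ y ∈ {y ∈ Y | y < y₀}, y ≡ c [ZMOD d] := fun y hy ↦ by
    obtain ⟨hyY, hlt⟩ := mem_filter.1 hy
    by_contra hyc
    exact hlt.not_ge (hy₀.2 ⟨hyY, hyc⟩)
  refine add_notMem_add_self_of_modEq hbelow hy₀.1.2 hx ?_
  obtain ⟨u, hu, v, hv, huv⟩ := mem_add.1 hsum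
  have := hY u hu
  have := hY v hv
  exact mem_add.2 ⟨u, mem_filter.2 ⟨hu, by omega⟩, v, mem_filter.2 ⟨hv, by omega⟩, huv⟩

theorem image_erase_subset_crossSums_of_isGreatest {X Y : Finset ℤ} {c d x₀ : ℤ}
    (hX : ∀ x ∈ X, x ≤ c) (hY : ∀ y ∈ Y, c ≤ y)
    (hx₀ : IsGreatest {x | x ∈ X ∧ ¬ x ≡ c [ZMOD d]} x₀) (hYmod : ∀ y ∈ Y, y ≡ c [ZMOD d]) :
    (Y.erase c).image (x₀ + ·) ⊆ crossSums X Y := image_subset_iff.2 fun y hy ↦ by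
  obtain ⟨hyc, hy⟩ := mem_erase.1 hy
  exact mem_crossSums.2 ⟨add_mem_add hx₀.1.1 hy,
    add_notMem_add_self_of_isGreatest hX hx₀ ((hY y hy).lt_of_ne' hyc) (hYmod y hy),
    add_notMem_add_self_of_modEq hYmod hx₀.1.2 (hYmod y hy)⟩

theorem image_erase_subset_crossSums_of_isLeast {X Y : Finset ℤ} {c d y₀ : ℤ}
    (hX : ∀ x ∈ X, x ≤ c) (hY : ∀ y ∈ Y, c ≤ y) (hXmod : ∀ x ∈ X, x ≡ c [ZMOD d])
    (hy₀ : IsLeast {y | y ∈ Y ∧ ¬ y ≡ c [ZMOD d]} y₀) :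
    (X.erase c).image (y₀ + ·) ⊆ crossSums X Y := image_subset_iff.2 fun x hx ↦ by
  obtain ⟨hxc, hx⟩ := mem_erase.1 hx
  exact mem_crossSums.2 ⟨add_comm x y₀ ▸ add_mem_add hx hy₀.1.1,
    add_notMem_add_self_of_modEq hXmod hy₀.1.2 (hXmod x hx),
    add_notMem_add_self_of_isLeast hY hy₀ ((hX x hx).lt_of_ne hxc) (hXmod x hx)⟩

theorem card_le_card_crossSums_add_one_of_modEq_right {X Y : Finset ℤ} {c d : ℤ}
    (hX : ∀ x ∈ X, x ≤ c) (hY : ∀ y ∈ Y, c ≤ y) (hcY : c ∈ Y)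
    (hXmod : ¬ ∀ x ∈ X, x ≡ c [ZMOD d]) (hYmod : ∀ y ∈ Y, y ≡ c [ZMOD d]) :
    #Y ≤ #(crossSums X Y) + 1 := by
  obtain ⟨x₀, hx₀⟩ := exists_isGreatest_of_not_forall hXmod
  have hcard := card_le_card (image_erase_subset_crossSums_of_isGreatest hX hY hx₀ hYmod)
  rw [card_image_of_injective _ (add_right_injective x₀), card_erase_of_mem hcY] at hcard
  omega

theorem card_le_card_crossSums_add_one_of_modEq_left {X Y : Finset ℤ} {c d : ℤ}
    (hX : ∀ x ∈ X, x ≤ c) (hY : ∀ y ∈ Y, c ≤ y) (hcX : c ∈ X)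
    (hXmod : ∀ x ∈ X, x ≡ c [ZMOD d]) (hYmod : ¬ ∀ y ∈ Y, y ≡ c [ZMOD d]) :
    #X ≤ #(crossSums X Y) + 1 := by
  obtain ⟨y₀, hy₀⟩ := exists_isLeast_of_not_forall hYmod
  have hcard := card_le_card (image_erase_subset_crossSums_of_isLeast hX hY hXmod hy₀)
  rw [card_image_of_injective _ (add_right_injective y₀), card_erase_of_mem hcX] at hcard
  omega

theorem card_add_card_le_card_crossSums_add_three {X Y : Finset ℤ} {c d e : ℤ}
    (hX : ∀ x ∈ X, x ≤ c) (hY : ∀ y ∈ Y, c ≤ y) (hcX : c ∈ X) (hcY : c ∈ Y)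
    (hXd : ∀ x ∈ X, x ≡ c [ZMOD d]) (hYd : ¬ ∀ y ∈ Y, y ≡ c [ZMOD d])
    (hXe : ¬ ∀ x ∈ X, x ≡ c [ZMOD e]) (hYe : ∀ y ∈ Y, y ≡ c [ZMOD e]) :
    #X + #Y ≤ #(crossSums X Y) + 3 := by
  obtain ⟨x₀, hx₀⟩ := exists_isGreatest_of_not_forall hXe
  obtain ⟨y₀, hy₀⟩ := exists_isLeast_of_not_forall hYd
  set V := (Y.erase c).image (x₀ + ·)
  set W := (X.erase c).image (y₀ + ·)
  have hVW : V ∪ W ⊆ crossSums X Y :=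
    union_subset (image_erase_subset_crossSums_of_isGreatest hX hY hx₀ hYe)
      (image_erase_subset_crossSums_of_isLeast hX hY hXd hy₀)
  have hinter : V ∩ W ⊆ {x₀ + y₀} := fun z hz ↦ by
    obtain ⟨hzV, hzW⟩ := mem_inter.1 hz
    obtain ⟨y, hy, rfl⟩ := mem_image.1 hzV
    obtain ⟨x, hx, hxy⟩ := mem_image.1 hzW
    replace hx := mem_of_mem_erase hx
    replace hy := mem_of_mem_erase hy
    have hxe : ¬ x ≡ c [ZMOD e] := fun h ↦
      hx₀.1.2 ((hYe y hy).add_right_cancel (hxy ▸ (hYe y₀ hy₀.1.1).add h))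
    have hyd : ¬ y ≡ c [ZMOD d] := fun h ↦
      hy₀.1.2 ((hXd x hx).add_right_cancel (hxy ▸ (hXd x₀ hx₀.1.1).add h))
    have := hx₀.2 ⟨hx, hxe⟩
    have := hy₀.2 ⟨hy, hyd⟩
    exact mem_singleton.2 (by omega)
  have hunion := card_union_add_card_inter V W
  rw [card_image_of_injective _ (add_right_injective x₀), card_erase_of_mem hcY,
    card_image_of_injective _ (add_right_injective y₀), card_erase_of_mem hcX] at hunion
  have hVW := card_le_card hVW
  have hinter := card_le_card hinter
  rw [card_singleton] at hinter
  omega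

theorem forall_modEq_of_crossSums_eq_empty_right {X Y : Finset ℤ} {c e : ℤ}
    (hX : ∀ x ∈ X, x ≤ c) (hY : ∀ y ∈ Y, c ≤ y) (he : 0 < e) (hcX : ∀ x ∈ X, x < c → x ≤ c - e)
    (heY : c + e ∈ Y) (hempty : crossSums X Y = ∅) : ∀ x ∈ X, x ≡ c [ZMOD e] := by
  by_contra hmod
  obtain ⟨x₀, hx₀⟩ := exists_isGreatest_of_not_forall hmod
  have hsum : x₀ + (c + e) ∈ Y + Y := by
    by_contra hnot
    have : x₀ + (c + e) ∈ crossSums X Y := mem_crossSums.2 ⟨add_mem_add hx₀.1.1 heY,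
      add_notMem_add_self_of_isGreatest hX hx₀ (by omega) (by simp), hnot⟩
    simp [hempty] at this
  obtain ⟨u, hu, v, hv, huv⟩ := mem_add.1 hsum
  have := hY u hu
  have := hY v hv
  have hne : x₀ ≠ c := fun h ↦ hx₀.1.2 (h ▸ Int.ModEq.rfl)
  have hle := hcX x₀ hx₀.1.1 ((hX x₀ hx₀.1.1).lt_of_ne hne)
  have heq : x₀ = c - e := by omega
  exact hx₀.1.2 (by simp [heq])

theorem forall_modEq_of_crossSums_eq_empty_left {X Y : Finset ℤ} {c e : ℤ}
    (hX : ∀ x ∈ X, x ≤ c) (hY : ∀ y ∈ Y, c ≤ y) (he : 0 < e) (heX : c - e ∈ X)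
    (hcY : ∀ y ∈ Y, c < y → c + e ≤ y) (hempty : crossSums X Y = ∅) :
    ∀ y ∈ Y, y ≡ c [ZMOD e] := by
  by_contra hmod
  obtain ⟨y₀, hy₀⟩ := exists_isLeast_of_not_forall hmod
  have hsum : y₀ + (c - e) ∈ X + X := by
    by_contra hnot
    have : y₀ + (c - e) ∈ crossSums X Y := mem_crossSums.2
      ⟨add_comm y₀ (c - e) ▸ add_mem_add heX hy₀.1.1, hnot,
      add_notMem_add_self_of_isLeast hY hy₀ (by omega) (by simp)⟩
    simp [hempty] at this
  obtain ⟨u, hu, v, hv, huv⟩ := mem_add.1 hsum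
  have := hX u hu
  have := hX v hv
  have hne : y₀ ≠ c := fun h ↦ hy₀.1.2 (h ▸ Int.ModEq.rfl)
  have hle := hcY y₀ hy₀.1.1 ((hY y₀ hy₀.1.1).lt_of_ne' hne)
  have heq : y₀ = c + e := by omega
  exact hy₀.1.2 (by simp [heq])

-- Otherwise the neighbours of `c` in `X` and `Y` lie at the same distance `e` from `c`, and all
-- elements are congruent to `c` modulo `e`, so that `e = 1`.
theorem crossSums_nonempty_of_isPrimitive {X Y : Finset ℤ} {c : ℤ} (hX : ∀ x ∈ X, x ≤ c)
    (hY : ∀ y ∈ Y, c ≤ y) (hc : c ∈ X) (hXc : ∃ x ∈ X, x < c) (hYc : ∃ y ∈ Y, c < y)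
    (hsucc : c + 1 ∉ Y) (hprim : IsPrimitive (X ∪ Y)) : (crossSums X Y).Nonempty := by
  by_contra hempty
  rw [not_nonempty_iff_eq_empty] at hempty
  obtain ⟨x₁, hx₁, hmax⟩ := exists_max_image _ id (filter_nonempty_iff.2 hXc)
  obtain ⟨y₁, hy₁, hmin⟩ := exists_min_image _ id (filter_nonempty_iff.2 hYc)
  obtain ⟨hx₁X, hx₁c⟩ := mem_filter.1 hx₁
  obtain ⟨hy₁Y, hcy₁⟩ := mem_filter.1 hy₁
  have hXgap : ∀ x ∈ X, x < c → x ≤ x₁ := fun x hx hxc ↦ hmax x (mem_filter.2 ⟨hx, hxc⟩)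
  have hYgap : ∀ y ∈ Y, c < y → y₁ ≤ y := fun y hy hcy ↦ hmin y (mem_filter.2 ⟨hy, hcy⟩)
  have hsum : x₁ + y₁ = c + c := by
    by_contra hne
    have hnew : x₁ + y₁ ∈ crossSums X Y := by
      refine mem_crossSums.2 ⟨add_mem_add hx₁X hy₁Y, fun h ↦ ?_, fun h ↦ ?_⟩
      all_goals obtain ⟨u, hu, v, hv, huv⟩ := mem_add.1 h
      · have := hX u hu
        have := hX v hv
        have := hXgap u hu
        have := hXgap v hv
        omega
      · have := hY u hu
        have := hY v hv
        have := hYgap u hu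
        have := hYgap v hv
        omega
    simp [hempty] at hnew
  obtain ⟨e, rfl⟩ : ∃ e, y₁ = c + e := ⟨y₁ - c, by omega⟩
  obtain rfl : x₁ = c - e := by omega
  have he : IsUnit e := (isPrimitive_iff_of_mem (mem_union_left Y hc)).1 hprim e fun a ha ↦
    (mem_union.1 ha).elim
      (forall_modEq_of_crossSums_eq_empty_right hX hY (by omega) hXgap hy₁Y hempty a)
      (forall_modEq_of_crossSums_eq_empty_left hX hY (by omega) hx₁X hYgap hempty a)
  obtain rfl | rfl := Int.isUnit_iff.1 he
  · exact hsucc hy₁Y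
  · omega

theorem three_mul_card_add_three_mul_card_le {X Y : Finset ℤ} {c : ℤ} (hX : ∀ x ∈ X, x ≤ c)
    (hY : ∀ y ∈ Y, c ≤ y) (hcX : c ∈ X) (hcY : c ∈ Y) (hXc : ∃ x ∈ X, x < c)
    (hYc : ∃ y ∈ Y, c < y) (hsucc : c + 1 ∉ Y) (hprim : IsPrimitive (X ∪ Y))
    (hXprim : IsPrimitive X → 3 * #X ≤ #(X + X) + 3)
    (hYprim : IsPrimitive Y → 3 * #Y ≤ #(Y + Y) + 3) :
    3 * #X + 3 * #Y ≤ #((X ∪ Y) + (X ∪ Y)) + 6 := by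
  have hcount := card_add_self_add_card_add_self_add_card_crossSums_le hX hY
  rw [Icc_self, card_singleton] at hcount
  have hXX := cauchy_davenport_add_of_linearOrder_isCancelAdd ⟨c, hcX⟩ ⟨c, hcX⟩
  have hYY := cauchy_davenport_add_of_linearOrder_isCancelAdd ⟨c, hcY⟩ ⟨c, hcY⟩
  have hnot_both {d : ℤ} (hd : ¬ IsUnit d) (hXd : ∀ x ∈ X, x ≡ c [ZMOD d]) :
      ¬ ∀ y ∈ Y, y ≡ c [ZMOD d] := fun hYd ↦
    hd ((isPrimitive_iff_of_mem (mem_union_left Y hcX)).1 hprim d fun a ha ↦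
      (mem_union.1 ha).elim (hXd a) (hYd a))
  by_cases hXp : IsPrimitive X <;> by_cases hYp : IsPrimitive Y
  · have hnew := (crossSums_nonempty_of_isPrimitive hX hY hcX hXc hYc hsucc hprim).card_pos
    have := hXprim hXp
    have := hYprim hYp
    omega
  · obtain ⟨e, he, hYe⟩ := exists_forall_modEq_of_not_isPrimitive hcY hYp
    have hnew := card_le_card_crossSums_add_one_of_modEq_right hX hY hcY
      (fun hXe ↦ hnot_both he hXe hYe) hYe
    have := hXprim hXp
    omega
  · obtain ⟨d, hd, hXd⟩ := exists_forall_modEq_of_not_isPrimitive hcX hXp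
    have hnew := card_le_card_crossSums_add_one_of_modEq_left hX hY hcX hXd (hnot_both hd hXd)
    have := hYprim hYp
    omega
  · obtain ⟨d, hd, hXd⟩ := exists_forall_modEq_of_not_isPrimitive hcX hXp
    obtain ⟨e, he, hYe⟩ := exists_forall_modEq_of_not_isPrimitive hcY hYp
    have hnew := card_add_card_le_card_crossSums_add_three hX hY hcX hcY hXd (hnot_both hd hXd)
      (fun hXe ↦ hnot_both he hXe hYe) hYe
    omega

/-! ### Induction on the cardinality -/

theorem three_mul_card_le_of_isCut_of_add_one_notMem {A : Finset ℤ} {l r c : ℤ} (hl : l ∈ A)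
    (hr : r ∈ A) (hprim : IsPrimitive A) (hc : IsCut A l r c) (hsucc : c + 1 ∉ A)
    (hlow : IsPrimitive {a ∈ A | a ≤ c} →
      3 * #{a ∈ A | a ≤ c} ≤ #({a ∈ A | a ≤ c} + {a ∈ A | a ≤ c}) + 3)
    (hhigh : IsPrimitive {a ∈ A | c ≤ a} →
      3 * #{a ∈ A | c ≤ a} ≤ #({a ∈ A | c ≤ a} + {a ∈ A | c ≤ a}) + 3) :
    3 * #A ≤ #(A + A) + 3 := by
  obtain ⟨hcA, hlc, hcr, -, -⟩ := hc
  have hunion := filter_le_union_filter_ge A (le_refl c)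
  have hhalves := three_mul_card_add_three_mul_card_le
    (X := {a ∈ A | a ≤ c}) (Y := {a ∈ A | c ≤ a})
    (fun x hx ↦ (mem_filter.1 hx).2) (fun y hy ↦ (mem_filter.1 hy).2)
    (mem_filter.2 ⟨hcA, le_rfl⟩) (mem_filter.2 ⟨hcA, le_rfl⟩)
    ⟨l, mem_filter.2 ⟨hl, hlc.le⟩, hlc⟩ ⟨r, mem_filter.2 ⟨hr, hcr.le⟩, hcr⟩
    (fun h ↦ hsucc (mem_filter.1 h).1) (by rwa [hunion]) hlow hhigh
  rw [hunion] at hhalves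
  have hcard := card_filter_le_add_card_filter_ge hcA
  omega

theorem three_mul_card_le_of_add_one_mem {A : Finset ℤ} {c : ℤ} (hcA : c ∈ A) (hsucc : c + 1 ∈ A)
    (hlow : IsPrimitive {a ∈ A | a ≤ c + 1} →
      3 * #{a ∈ A | a ≤ c + 1} ≤ #({a ∈ A | a ≤ c + 1} + {a ∈ A | a ≤ c + 1}) + 3)
    (hhigh : IsPrimitive {a ∈ A | c ≤ a} →
      3 * #{a ∈ A | c ≤ a} ≤ #({a ∈ A | c ≤ a} + {a ∈ A | c ≤ a}) + 3) :
    3 * #A ≤ #(A + A) + 3 := by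
  have hcount := card_add_self_add_card_add_self_add_card_crossSums_le
    (X := {a ∈ A | a ≤ c + 1}) (Y := {a ∈ A | c ≤ a})
    (fun x hx ↦ (mem_filter.1 hx).2) (fun y hy ↦ (mem_filter.1 hy).2)
  rw [filter_le_union_filter_ge A (by omega), Int.card_Icc] at hcount
  have hlow := hlow (isPrimitive_of_mem_of_add_one_mem (c := c)
    (mem_filter.2 ⟨hcA, by omega⟩) (mem_filter.2 ⟨hsucc, le_rfl⟩))
  have hhigh := hhigh (isPrimitive_of_mem_of_add_one_mem (c := c)
    (mem_filter.2 ⟨hcA, le_rfl⟩) (mem_filter.2 ⟨hsucc, by omega⟩))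
  have hcard := card_filter_le_add_card_filter_ge hcA
  have hcard_succ := card_filter_le_add_one_of_mem hsucc
  omega

theorem three_mul_card_le_of_isCut {A : Finset ℤ} {l r c : ℤ} (hl : l ∈ A) (hr : r ∈ A)
    (hA : A ⊆ Icc l r) (hprim : IsPrimitive A) (hc : IsCut A l r c)
    (ih : ∀ B ⊂ A, ∀ l ∈ B, ∀ r ∈ B, B ⊆ Icc l r → 2 * (#B : ℤ) - 3 ≤ r - l → IsPrimitive B →
      3 * #B ≤ #(B + B) + 3) :
    3 * #A ≤ #(A + A) + 3 := by
  obtain ⟨hcA, hlc, hcr, hlow, hhigh⟩ := id hc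
  have hupper := ih {a ∈ A | c ≤ a} (filter_ssubset.2 ⟨l, hl, hlc.not_ge⟩)
    c (mem_filter.2 ⟨hcA, le_rfl⟩) r (mem_filter.2 ⟨hr, hcr.le⟩)
    (fun a ha ↦ mem_Icc.2 ⟨(mem_filter.1 ha).2, (mem_Icc.1 (hA (mem_filter.1 ha).1)).2⟩)
    (by omega)
  have hlower (t : ℤ) (ht : t ∈ A) (hct : c ≤ t) (htr : t < r)
      (hsparse : 2 * (#{a ∈ A | a ≤ t} : ℤ) - 3 ≤ t - l) :=
    ih {a ∈ A | a ≤ t} (filter_ssubset.2 ⟨r, hr, htr.not_ge⟩)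
      l (mem_filter.2 ⟨hl, by omega⟩) t (mem_filter.2 ⟨ht, le_rfl⟩)
      (fun a ha ↦ mem_Icc.2 ⟨(mem_Icc.1 (hA (mem_filter.1 ha).1)).1, (mem_filter.1 ha).2⟩)
      hsparse
  by_cases hsucc : c + 1 ∈ A
  · have hpair : {c, c + 1} ⊆ {a ∈ A | c ≤ a} := by
      simp [insert_subset_iff, hcA, hsucc]
    have hpair := card_le_card hpair
    rw [card_pair (by omega)] at hpair
    have hcard := card_filter_le_add_one_of_mem hsucc
    exact three_mul_card_le_of_add_one_mem hcA hsucc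
      (hlower (c + 1) hsucc (by omega) (by omega) (by omega)) hupper
  · exact three_mul_card_le_of_isCut_of_add_one_notMem hl hr hprim hc hsucc
      (hlower c hcA le_rfl hcr (by omega)) hupper

theorem three_mul_card_le_card_add_self {A : Finset ℤ} {l r : ℤ} (hl : l ∈ A) (hr : r ∈ A)
    (hA : A ⊆ Icc l r) (hsparse : 2 * (#A : ℤ) - 3 ≤ r - l) (hprim : IsPrimitive A) :
    3 * #A ≤ #(A + A) + 3 := by
  induction A using Finset.strongInduction generalizing l r with
  | H A ih =>
    rcases le_or_gt r l with hrl | hlr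
    · have hcard := card_le_card hA
      rw [Int.card_Icc] at hcard
      omega
    rcases hsparse.eq_or_lt with hdense | hsparse
    · have := sub_add_card_le_card_add_self hl hr hA hdense.ge
      omega
    by_cases hcut : ∃ c, IsCut A l r c
    · obtain ⟨c, hc⟩ := hcut
      exact three_mul_card_le_of_isCut hl hr hA hprim hc
        fun B hB l hl r hr hBlr hsparse hprim ↦ ih B hB hl hr hBlr hsparse hprim
    · exact three_mul_card_le_of_forall_not_isCut hl hr hA hlr (by omega) (not_exists.1 hcut)

theorem isPrimitive_of_gcd_eq_one {A : Finset ℤ} (h0 : 0 ∈ A) (hgcd : A.gcd id = 1) :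
    IsPrimitive A :=
  (isPrimitive_iff_of_mem h0).2 fun _ hd ↦ isUnit_of_dvd_one <| hgcd ▸
    dvd_gcd fun a ha ↦ (hd a ha).symm.dvd.trans (by simp)

theorem doubling_lower_bound (A' : Finset ℤ) (s : ℕ) (hs : 2 ≤ s) (hcard : A'.card = s)
    (h0 : 0 ∈ A') (hpos : ∀ a ∈ A', 0 ≤ a)
    (aS : ℤ) (haS : aS ∈ A') (haSmax : ∀ a ∈ A', a ≤ aS)
    (hgcd : A'.gcd id = 1) :
    2 * (s : ℤ) + min (aS - s + 3) (s : ℤ) - 3 ≤ ((A' + A').card : ℤ) := by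
  have hA' : A' ⊆ Icc 0 aS := fun a ha ↦ mem_Icc.2 ⟨hpos a ha, haSmax a ha⟩
  rcases le_total aS (2 * s - 3) with hdense | hsparse
  · have := sub_add_card_le_card_add_self h0 haS hA' (by omega)
    omega
  · have := three_mul_card_le_card_add_self h0 haS hA' (by omega)
      (isPrimitive_of_gcd_eq_one h0 hgcd)
    omega
end

section
/- Let s ≥ 6 and d be positive integers, a_1 = 0, a_2, ..., a_s integers with gcd of the nonzero a_i equal to 1, and B_1, ..., B_s nonempty subsets of Z/dZ with 0 ∈ B_1 and |B_1| ≥ |B_i| for all i. Let B~ = ∪_{i=1}^s ({a_i} × B_i) ⊆ Z × Z/dZ. If |B~ + B~| < 2.5 |B~|, then there exists a subgroup H of Z/dZ with |H| < (3/2)|B_1| such that B_1 lies in a single coset of H. -/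
open Pointwise

/-!
Call a set dense if it lies in a coset of a subgroup of order less than `3/2` its size, and suppose
that `B₁` is not dense. Hamidoune's atoms give `|X + Y| ≥ |X| + |Y|/2` for `0 ∈ Y`, unless `X + Y`
fills a coset of `⟨Y⟩` or `X` meets two such cosets. Hence `|X + Y|` is at least one of
`|X| + |Y|/2`, `3/2 |X|` and `2|Y|` when `X` is not dense, while `|B₁ + Y| ≥ 2|Y|` when `Y` is
dense.

Let `b = |B₁|` and let `F c` be the size of the fibre of the doubled set over `c`, so that
`|B i + B j| ≤ F (a i + a j)`. If `min (f i) (g j) ≤ F (a i + a j)` for all `i` and `j`, then for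
each level `t` reached by both `f` and `g` the Cauchy-Davenport inequality in the torsion-free
factor gives `|{c | t ≤ F c}| ≥ |{i | t ≤ f i}| + |{j | t ≤ g j}| - 1`. For `0 < t ≤ b` take
`f = |B i|` and `g = b`. For `b < t ≤ 4/3 b` take `f = 4/3 |B i|`, or `0` if `B i` is dense, and
`g = 2 |B j|`; the factor `4/3` is where `|B i| + |B j|/2` and `2 |B j|` balance. For
`4/3 b < t ≤ 2b` count only the fibres containing some `B₁ + B j`. Summing over `t` gives
`∑ F ≥ 5/2 ∑ |B i|`.
-/

section Isoperimetry

lemma card_inter_add_add_card_union_add_le {G : Type*} [Add G] [DecidableEq G] (Z W Y : Finset G) :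
    (Z ∩ W + Y).card + (Z ∪ W + Y).card ≤ (Z + Y).card + (W + Y).card := by
  rw [Finset.union_add, ← Finset.card_inter_add_card_union (Z + Y) (W + Y)]
  gcongr
  exact Finset.inter_add_subset

variable {G : Type*} [AddCommGroup G] [DecidableEq G] {X Y Z W : Finset G} {g : G}

/-- `Z` separates `Y`, in the sense of Hamidoune's isoperimetric method: `Z` is nonempty and its
sumset with `Y` is not the whole group. -/
def IsSeparating (Y Z : Finset G) : Prop :=
  Z.Nonempty ∧ ∃ g, g ∉ Z + Y

/-- An atom of `Y` in the sense of Hamidoune: a set minimising `|Z + Y| - |Z|` among the separating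
sets, and of least size among the minimisers. The differences are compared with the subtracted
terms moved across, so that no truncated subtraction occurs. -/
structure IsSumsetAtom (Y Z : Finset G) : Prop where
  isSeparating : IsSeparating Y Z
  card_add_add_le : ∀ W, IsSeparating Y W → (Z + Y).card + W.card ≤ (W + Y).card + Z.card
  card_le : ∀ W, IsSeparating Y W → (W + Y).card + Z.card ≤ (Z + Y).card + W.card →
    Z.card ≤ W.card

lemma IsSeparating.exists_isSumsetAtom (hX : IsSeparating Y X) (hY : Y.Nonempty) :
    ∃ Z, IsSumsetAtom Y Z := by
  obtain ⟨Z, hZ, hmin⟩ := exists_minimalFor_of_wellFoundedLT (IsSeparating Y)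
    (fun Z => toLex ((Z + Y).card - Z.card, Z.card)) ⟨X, hX⟩
  have card_le_card_add (W : Finset G) : W.card ≤ (W + Y).card := Finset.card_le_card_add_right hY
  have hlex (W : Finset G) (hW : IsSeparating Y W) := le_of_not_gt
    fun hlt => (hlt.trans_le (hmin hW hlt.le)).false
  simp only [Prod.Lex.toLex_le_toLex] at hlex
  refine ⟨Z, hZ, fun W hW => ?_, fun W hW _ => ?_⟩ <;>
    grind

-- The negated complement of `Z + Y` is again separating, with at most the same expansion.
lemma IsSumsetAtom.card_add_card_le_card [Fintype G] (hZ : IsSumsetAtom Y Z) :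
    Z.card + (Z + Y).card ≤ Fintype.card G := by
  have hcompl : (Z + Y)ᶜ.card = Fintype.card G - (Z + Y).card := Finset.card_compl _
  have hle : (Z + Y).card ≤ Fintype.card G := Finset.card_le_univ _
  have hdisj : Disjoint (-(Z + Y)ᶜ + Y) (-Z) := by
    rw [Finset.disjoint_left]
    intro x hx hxZ
    obtain ⟨w, hw, y, hy, rfl⟩ := Finset.mem_add.1 hx
    rw [Finset.mem_neg', Finset.mem_compl] at hw
    exact hw (Finset.mem_add.2 ⟨_, Finset.mem_neg'.1 hxZ, y, hy, by abel⟩)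
  have hdual : (-(Z + Y)ᶜ + Y).card + Z.card ≤ Fintype.card G := by
    rw [← Finset.card_neg Z, ← Finset.card_union_of_disjoint hdisj]
    exact Finset.card_le_univ _
  obtain ⟨⟨z, hz⟩, g, hg⟩ := hZ.isSeparating
  have hsep : IsSeparating Y (-(Z + Y)ᶜ) :=
    ⟨⟨-g, Finset.neg_mem_neg (Finset.mem_compl.2 hg)⟩,
      -z, fun h => Finset.disjoint_left.1 hdisj h (Finset.neg_mem_neg hz)⟩
  have := hZ.card_le _ hsep (by rw [Finset.card_neg]; omega)
  rw [Finset.card_neg] at this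
  omega

lemma IsSumsetAtom.vadd_eq_of_inter_nonempty (hZ : IsSumsetAtom Y Z)
    (hg : (Z ∩ (g +ᵥ Z)).Nonempty) : g +ᵥ Z = Z := by
  by_contra hne
  have hcardW : (g +ᵥ Z).card = Z.card := Finset.card_vadd_finset g Z
  have hcardWY : ((g +ᵥ Z) + Y).card = (Z + Y).card := by
    rw [vadd_add_assoc, Finset.card_vadd_finset]
  have hlt : (Z ∩ (g +ᵥ Z)).card < Z.card :=
    Finset.card_lt_card ⟨Finset.inter_subset_left, fun h => hne
      (Finset.eq_of_subset_of_card_le (Finset.subset_inter_iff.1 h).2 hcardW.le).symm⟩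
  obtain ⟨hZne, x, hx⟩ := hZ.isSeparating
  have hinter : IsSeparating Y (Z ∩ (g +ᵥ Z)) :=
    ⟨hg, x, fun h => hx (Finset.add_subset_add_right Finset.inter_subset_left h)⟩
  have hexp : (Z + Y).card + (Z ∩ (g +ᵥ Z)).card < (Z ∩ (g +ᵥ Z) + Y).card + Z.card :=
    not_le.1 fun h => hlt.not_ge (hZ.card_le _ hinter h)
  have hsubmod := card_inter_add_add_card_union_add_le Z (g +ᵥ Z) Y
  have hcard := Finset.card_inter_add_card_union Z (g +ᵥ Z)
  by_cases hunion : IsSeparating Y (Z ∪ (g +ᵥ Z))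
  · have := hZ.card_add_add_le _ hunion
    omega
  · have hfull : ∀ x, x ∈ Z ∪ (g +ᵥ Z) + Y := by
      simpa [IsSeparating, hZne.mono Finset.subset_union_left] using hunion
    let _ : Fintype G := ⟨_, hfull⟩
    have : Z.card + (Z + Y).card ≤ (Z ∪ (g +ᵥ Z) + Y).card := hZ.card_add_card_le_card
    have := hg.card_pos
    omega

lemma IsSumsetAtom.exists_vadd_ne (hZ : IsSumsetAtom Y Z) (h0 : 0 ∈ Y)
    (hY : AddSubgroup.closure (Y : Set G) = ⊤) : ∃ y ∈ Y, y +ᵥ Z ≠ Z := by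
  by_contra! hfix
  have hstab : AddAction.stabilizer G Z = ⊤ :=
    top_le_iff.1 (hY ▸ (AddSubgroup.closure_le _).2 hfix)
  obtain ⟨⟨z, hz⟩, g, hg⟩ := hZ.isSeparating
  have hgZ : (g - z) +ᵥ Z = Z :=
    AddAction.mem_stabilizer_iff.1 (hstab ▸ AddSubgroup.mem_top (g - z))
  have : g ∈ Z := hgZ ▸ Finset.mem_vadd_finset.2 ⟨z, hz, sub_add_cancel g z⟩
  exact hg (by simpa using Finset.add_mem_add this h0)

lemma IsSumsetAtom.two_mul_card_le (hZ : IsSumsetAtom Y Z) (h0 : 0 ∈ Y)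
    (hY : AddSubgroup.closure (Y : Set G) = ⊤) : 2 * Z.card ≤ (Z + Y).card := by
  obtain ⟨y, hy, hne⟩ := hZ.exists_vadd_ne h0 hY
  have hdisj : Disjoint Z (y +ᵥ Z) := by
    rw [Finset.disjoint_iff_inter_eq_empty, ← Finset.not_nonempty_iff_eq_empty]
    exact fun h => hne (hZ.vadd_eq_of_inter_nonempty h)
  have hsub : Z ∪ (y +ᵥ Z) ⊆ Z + Y := by
    refine Finset.union_subset (Finset.subset_add_left Z h0) ?_
    rw [add_comm Z Y]
    exact Finset.vadd_finset_subset_add hy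
  have := Finset.card_le_card hsub
  rw [Finset.card_union_of_disjoint hdisj, Finset.card_vadd_finset] at this
  omega

lemma IsSeparating.two_mul_card_add_card_le (hX : IsSeparating Y X) (h0 : 0 ∈ Y)
    (hY : AddSubgroup.closure (Y : Set G) = ⊤) :
    2 * X.card + Y.card ≤ 2 * (X + Y).card := by
  obtain ⟨Z, hZ⟩ := hX.exists_isSumsetAtom ⟨0, h0⟩
  have := hZ.two_mul_card_le h0 hY
  have : Y.card ≤ (Z + Y).card := Finset.card_le_card_add_left hZ.isSeparating.1
  have := hZ.card_add_add_le X hX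
  omega

lemma two_mul_card_add_card_le_or_closure_le (hX : X.Nonempty) (h0 : 0 ∈ Y)
    (hXY : ∀ x ∈ X, x ∈ AddSubgroup.closure (Y : Set G)) :
    2 * X.card + Y.card ≤ 2 * (X + Y).card ∨
      (AddSubgroup.closure (Y : Set G) : Set G) ⊆ ↑(X + Y) := by
  obtain ⟨H, hH⟩ : ∃ H, AddSubgroup.closure (Y : Set G) = H := ⟨_, rfl⟩
  have hYH : ∀ y ∈ Y, y ∈ H := fun y hy => hH ▸ AddSubgroup.subset_closure hy
  rw [hH] at hXY ⊢
  lift X to Finset H using hXY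
  lift Y to Finset H using hYH
  have hadd : X.image (↑) + Y.image (↑) = (X + Y).image ((↑) : H → G) :=
    (Finset.image_add H.subtype).symm
  have hcard (S : Finset H) : (S.image ((↑) : H → G)).card = S.card :=
    Finset.card_image_of_injective S Subtype.val_injective
  have hX : X.Nonempty := Finset.image_nonempty.1 hX
  have h0 : 0 ∈ Y := by simpa using h0
  have htop : AddSubgroup.closure (Y : Set H) = ⊤ := by
    apply AddSubgroup.map_injective H.subtype_injective
    simpa [AddMonoidHom.map_closure, ← AddMonoidHom.range_eq_map] using hH
  simp only [hadd, hcard]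
  by_cases hsep : IsSeparating Y X
  · exact .inl (hsep.two_mul_card_add_card_le h0 htop)
  · have hfull : ∀ x, x ∈ X + Y := by simpa [IsSeparating, hX] using hsep
    exact .inr fun h hh => Finset.mem_coe.2 (Finset.mem_image_of_mem _ (hfull ⟨h, hh⟩))

end Isoperimetry

section Density

variable {G : Type*} [AddCommGroup G] {X Y : Finset G}

/-- `X` is dense in a coset: it lies in a coset of a finite subgroup `H` with `|H| < 3/2 |X|`.
Finiteness is required separately because `Nat.card` vanishes on infinite types. -/
def IsDenseInCoset (X : Finset G) : Prop :=
  ∃ (H : AddSubgroup G) (x : G), Finite H ∧ 2 * Nat.card H < 3 * X.card ∧ ∀ z ∈ X, z - x ∈ H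

lemma three_mul_card_le_of_not_isDenseInCoset {H : AddSubgroup G} {x : G} {S : Finset G}
    (hX : ¬ IsDenseInCoset X) (hXH : ∀ z ∈ X, z - x ∈ H) (hHS : (H : Set G) ⊆ S) :
    3 * X.card ≤ 2 * S.card := by
  have hfin : Finite H := S.finite_toSet.subset hHS
  have hH : 3 * X.card ≤ 2 * Nat.card H := by
    by_contra! h
    exact hX ⟨H, x, hfin, h, hXH⟩
  have : Nat.card H ≤ S.card := by
    simpa using Nat.card_mono S.finite_toSet hHS
  omega

variable [DecidableEq G]

lemma two_mul_card_le_card_add_of_sub_notMem {H : AddSubgroup G} {x x' y : G} (hx : x ∈ X)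
    (hx' : x' ∈ X) (hxx' : x' - x ∉ H) (hY : ∀ z ∈ Y, z - y ∈ H) :
    2 * Y.card ≤ (X + Y).card := by
  have hdisj : Disjoint (x +ᵥ Y) (x' +ᵥ Y) := by
    refine Finset.disjoint_left.2 fun z hz hz' => hxx' ?_
    obtain ⟨u, hu, rfl⟩ := Finset.mem_vadd_finset.1 hz
    obtain ⟨v, hv, huv⟩ := Finset.mem_vadd_finset.1 hz'
    have : x' - x = (u - y) - (v - y) := by
      rw [sub_sub_sub_cancel_right, sub_eq_sub_iff_add_eq_add, add_comm u]
      exact huv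
    exact this ▸ H.sub_mem (hY u hu) (hY v hv)
  have hsub : (x +ᵥ Y) ∪ (x' +ᵥ Y) ⊆ X + Y :=
    Finset.union_subset (Finset.vadd_finset_subset_add hx) (Finset.vadd_finset_subset_add hx')
  have := Finset.card_le_card hsub
  rw [Finset.card_union_of_disjoint hdisj, Finset.card_vadd_finset, Finset.card_vadd_finset] at this
  omega

lemma IsDenseInCoset.two_mul_card_le_card_add (hY : IsDenseInCoset Y) (hX : ¬ IsDenseInCoset X)
    (hXne : X.Nonempty) (hYX : Y.card ≤ X.card) : 2 * Y.card ≤ (X + Y).card := by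
  obtain ⟨H, y, hH, hcard, hy⟩ := hY
  obtain ⟨x, hx⟩ := hXne
  have hx' : ∃ x' ∈ X, x' - x ∉ H := by
    by_contra! h
    exact hX ⟨H, x, hH, by omega, h⟩
  obtain ⟨x', hx', hxx'⟩ := hx'
  exact two_mul_card_le_card_add_of_sub_notMem hx hx' hxx' hy

lemma card_add_lower_bound_of_not_isDenseInCoset_of_zero_mem (hX : ¬ IsDenseInCoset X)
    (hXne : X.Nonempty) (h0 : 0 ∈ Y) :
    2 * X.card + Y.card ≤ 2 * (X + Y).card ∨ 3 * X.card ≤ 2 * (X + Y).card ∨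
      2 * Y.card ≤ (X + Y).card := by
  obtain ⟨x, hx⟩ := hXne
  by_cases hcoset : ∀ z ∈ X, z - x ∈ AddSubgroup.closure (Y : Set G)
  · have hcard : ((-x +ᵥ X) + Y).card = (X + Y).card := by
      rw [vadd_add_assoc, Finset.card_vadd_finset]
    have hmem : ∀ z ∈ -x +ᵥ X, z ∈ AddSubgroup.closure (Y : Set G) := by
      intro z hz
      obtain ⟨w, hw, rfl⟩ := Finset.mem_vadd_finset.1 hz
      rw [vadd_eq_add, neg_add_eq_sub]
      exact hcoset w hw
    rw [← hcard]
    refine (two_mul_card_add_card_le_or_closure_le ⟨_, Finset.vadd_mem_vadd_finset hx⟩ h0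
      hmem).imp (fun h => ?_) fun h => .inl ?_
    · rwa [Finset.card_vadd_finset] at h
    · exact three_mul_card_le_of_not_isDenseInCoset hX hcoset h
  · push Not at hcoset
    obtain ⟨x', hx', hxx'⟩ := hcoset
    exact .inr (.inr (two_mul_card_le_card_add_of_sub_notMem (y := 0) hx hx' hxx' fun y hy => by
      simpa using AddSubgroup.subset_closure hy))

lemma card_add_lower_bound_of_not_isDenseInCoset (hX : ¬ IsDenseInCoset X) (hXne : X.Nonempty)
    (hY : Y.Nonempty) :
    2 * X.card + Y.card ≤ 2 * (X + Y).card ∨ 3 * X.card ≤ 2 * (X + Y).card ∨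
      2 * Y.card ≤ (X + Y).card := by
  obtain ⟨y, hy⟩ := hY
  have h0 : 0 ∈ -y +ᵥ Y := Finset.mem_vadd_finset.2 ⟨y, hy, by simp⟩
  have hcard : (X + (-y +ᵥ Y)).card = (X + Y).card := by
    rw [add_vadd_comm, Finset.card_vadd_finset]
  simpa only [hcard, Finset.card_vadd_finset] using
    card_add_lower_bound_of_not_isDenseInCoset_of_zero_mem hX hXne h0

end Density

section LayerCake

/-- The number of levels `t` with `l < t ≤ min n u`: the part of `n` lying in the band `(l, u]`. -/
def bandPart (l u n : ℕ) : ℕ :=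
  min u n - l

lemma card_filter_le_Ioc (l u n : ℕ) : ((Finset.Ioc l u).filter (· ≤ n)).card = bandPart l u n := by
  rw [bandPart, ← Nat.card_Ioc]
  congr 1
  grind

lemma sum_card_filter_le_eq_sum_bandPart {ι : Type*} (s : Finset ι) (f : ι → ℕ) (l u : ℕ) :
    ∑ t ∈ Finset.Ioc l u, (s.filter (t ≤ f ·)).card = ∑ i ∈ s, bandPart l u (f i) := by
  simp only [← card_filter_le_Ioc]
  exact Finset.sum_card_bipartiteAbove_eq_sum_card_bipartiteBelow fun t i => t ≤ f i

lemma sum_comp_add_left_le {ι M : Type*} [Add M] [IsLeftCancelAdd M] {s : Finset ι} {a : ι → M}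
    {C : Finset M} {i₀ : ι} (ha : Set.InjOn a s) (hC : ∀ j ∈ s, a i₀ + a j ∈ C) (F : M → ℕ) :
    ∑ j ∈ s, F (a i₀ + a j) ≤ ∑ c ∈ C, F c := by
  classical
  rw [← Finset.sum_image (g := fun j => a i₀ + a j) fun i hi j hj h =>
    ha hi hj (add_left_cancel h)]
  exact Finset.sum_le_sum_of_subset (Finset.image_subset_iff.2 hC)

variable {ι M : Type*} [AddGroup M] [IsAddTorsionFree M] {s : Finset ι} {a : ι → M}
  {C : Finset M} {f g k : ι → ℕ} {F : M → ℕ}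

lemma card_filter_add_card_filter_le (ha : Set.InjOn a s)
    (hC : ∀ i ∈ s, ∀ j ∈ s, a i + a j ∈ C) {t : ℕ} (hf : ∃ i ∈ s, t ≤ f i) (hg : ∃ j ∈ s, t ≤ g j)
    (hF : ∀ i ∈ s, ∀ j ∈ s, t ≤ f i → t ≤ g j → t ≤ F (a i + a j)) :
    (s.filter (t ≤ f ·)).card + (s.filter (t ≤ g ·)).card ≤ (C.filter (t ≤ F ·)).card + 1 := by
  classical
  have hcd := cauchy_davenport_of_isAddTorsionFree (s := (s.filter (t ≤ f ·)).image a)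
    (t := (s.filter (t ≤ g ·)).image a) (by simpa [Finset.filter_nonempty_iff])
    (by simpa [Finset.filter_nonempty_iff])
  rw [Finset.card_image_of_injOn (ha.mono (Finset.filter_subset _ _)),
    Finset.card_image_of_injOn (ha.mono (Finset.filter_subset _ _))] at hcd
  have hsub : (s.filter (t ≤ f ·)).image a + (s.filter (t ≤ g ·)).image a ⊆
      C.filter (t ≤ F ·) := by
    intro c hc
    simp only [Finset.mem_add, Finset.mem_image, Finset.mem_filter] at hc
    obtain ⟨_, ⟨i, ⟨hi, hti⟩, rfl⟩, _, ⟨j, ⟨hj, htj⟩, rfl⟩, rfl⟩ := hc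
    exact Finset.mem_filter.2 ⟨hC i hi j hj, hF i hi j hj hti htj⟩
  have := Finset.card_le_card hsub
  omega

lemma sum_bandPart_add_sum_bandPart_le (ha : Set.InjOn a s)
    (hC : ∀ i ∈ s, ∀ j ∈ s, a i + a j ∈ C) {l u : ℕ} (hf : ∃ i ∈ s, u ≤ f i)
    (hg : ∃ j ∈ s, u ≤ g j)
    (hF : ∀ i ∈ s, ∀ j ∈ s, min (f i) (g j) ≤ max l (F (a i + a j))) :
    ∑ i ∈ s, bandPart l u (f i) + ∑ j ∈ s, bandPart l u (g j) ≤
      ∑ c ∈ C, bandPart l u (F c) + (u - l) := by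
  have hlevel : ∀ t ∈ Finset.Ioc l u, (s.filter (t ≤ f ·)).card + (s.filter (t ≤ g ·)).card ≤
      (C.filter (t ≤ F ·)).card + 1 := by
    intro t ht
    rw [Finset.mem_Ioc] at ht
    refine card_filter_add_card_filter_le ha hC (hf.imp fun i hi => ⟨hi.1, ht.2.trans hi.2⟩)
      (hg.imp fun j hj => ⟨hj.1, ht.2.trans hj.2⟩) fun i hi j hj hti htj => ?_
    have := hF i hi j hj
    omega
  simpa [Finset.sum_add_distrib, sum_card_filter_le_eq_sum_bandPart] using
    Finset.sum_le_sum hlevel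

/-- Lower bound for the contribution of an index with fibre of size `k` to the sum of `6 F`, where
`b` is the size of the largest fibre, `m` the value of `F` at the translate of the index and `p`
says whether the fibre is dense. The factor 6 keeps the level thresholds integral. -/
def levelWeight (b k m : ℕ) (p : Prop) [Decidable p] : ℕ :=
  bandPart 0 (6 * b) (6 * k) + 6 * b +
    (bandPart (6 * b) (8 * b) (if p then 0 else 8 * k) + bandPart (6 * b) (8 * b) (12 * k)) +
    bandPart (8 * b) (12 * b) (6 * m)

lemma le_two_mul_levelWeight {b k m : ℕ} {p : Prop} [Decidable p] (hk : k ≤ b)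
    (hm : 2 * b + k ≤ 2 * m ∨ 3 * b ≤ 2 * m ∨ 2 * k ≤ m) (hp : p → 2 * k ≤ m) :
    30 * k + 3 * b ≤ 2 * levelWeight b k m p := by
  unfold levelWeight bandPart
  split_ifs with h
  · have := hp h
    omega
  · omega

lemma le_levelWeight_self {b m : ℕ} {p : Prop} [Decidable p] (hm : 3 * b ≤ 2 * m) (hp : ¬p) :
    17 * b ≤ levelWeight b b m p := by
  simp only [levelWeight, bandPart, if_neg hp]
  omega

lemma sum_levelWeight_le {i₀ : ι} (hi₀ : i₀ ∈ s) (ha : Set.InjOn a s)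
    (hC : ∀ i ∈ s, ∀ j ∈ s, a i + a j ∈ C) {P : ι → Prop} [DecidablePred P] (hP : ¬ P i₀)
    (hF : ∀ i ∈ s, ∀ j ∈ s, k i ≤ F (a i + a j))
    (hF' : ∀ i ∈ s, ∀ j ∈ s, ¬ P i → 2 * k i + k j ≤ 2 * F (a i + a j) ∨
      3 * k i ≤ 2 * F (a i + a j) ∨ 2 * k j ≤ F (a i + a j)) :
    ∑ j ∈ s, levelWeight (k i₀) (k j) (F (a i₀ + a j)) (P j) ≤
      6 * ∑ c ∈ C, F c + 8 * k i₀ := by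
  have hlow := sum_bandPart_add_sum_bandPart_le (l := 0) (u := 6 * k i₀) (f := fun i => 6 * k i)
    (g := fun _ => 6 * k i₀) (F := fun c => 6 * F c) ha hC ⟨i₀, hi₀, le_rfl⟩ ⟨i₀, hi₀, le_rfl⟩
    fun i hi j hj => by have := hF i hi j hj; omega
  have hmid := sum_bandPart_add_sum_bandPart_le (l := 6 * k i₀) (u := 8 * k i₀)
    (f := fun i => if P i then 0 else 8 * k i) (g := fun j => 12 * k j) (F := fun c => 6 * F c)
    ha hC ⟨i₀, hi₀, by simp [hP]⟩ ⟨i₀, hi₀, by omega⟩ fun i hi j hj => by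
      split_ifs with hd
      · omega
      · have := hF' i hi j hj hd
        omega
  have hhigh := sum_comp_add_left_le ha (hC i₀ hi₀)
    fun c => bandPart (8 * k i₀) (12 * k i₀) (6 * F c)
  have htotal : ∑ c ∈ C, (bandPart 0 (6 * k i₀) (6 * F c) +
      bandPart (6 * k i₀) (8 * k i₀) (6 * F c) + bandPart (8 * k i₀) (12 * k i₀) (6 * F c)) ≤
      ∑ c ∈ C, 6 * F c :=
    Finset.sum_le_sum fun c _ => by unfold bandPart; omega
  have hconst : bandPart 0 (6 * k i₀) (6 * k i₀) = 6 * k i₀ := by simp [bandPart]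
  simp only [Finset.sum_add_distrib, ← Finset.mul_sum] at htotal
  simp only [hconst] at hlow
  simp only [levelWeight, Finset.sum_add_distrib]
  omega

lemma five_mul_sum_le_two_mul_sum (hs : 5 ≤ s.card) {i₀ : ι} (hi₀ : i₀ ∈ s) (ha : Set.InjOn a s)
    (hC : ∀ i ∈ s, ∀ j ∈ s, a i + a j ∈ C) (hk : ∀ i ∈ s, k i ≤ k i₀) {P : ι → Prop} (hP : ¬ P i₀)
    (hF : ∀ i ∈ s, ∀ j ∈ s, k i ≤ F (a i + a j))
    (hF' : ∀ i ∈ s, ∀ j ∈ s, ¬ P i → 2 * k i + k j ≤ 2 * F (a i + a j) ∨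
      3 * k i ≤ 2 * F (a i + a j) ∨ 2 * k j ≤ F (a i + a j))
    (hFP : ∀ j ∈ s, P j → 2 * k j ≤ F (a i₀ + a j)) :
    5 * ∑ i ∈ s, k i ≤ 2 * ∑ c ∈ C, F c := by
  classical
  have hupper := sum_levelWeight_le hi₀ ha hC hP hF hF'
  rw [← Finset.add_sum_erase s _ hi₀] at hupper ⊢
  have hdouble : 3 * k i₀ ≤ 2 * F (a i₀ + a i₀) := by
    have := hF' i₀ hi₀ i₀ hi₀ hP
    omega
  have hself := le_levelWeight_self hdouble hP
  have hrest : ∑ j ∈ s.erase i₀, (30 * k j + 3 * k i₀) ≤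
      ∑ j ∈ s.erase i₀, 2 * levelWeight (k i₀) (k j) (F (a i₀ + a j)) (P j) :=
    Finset.sum_le_sum fun j hj =>
      have hj := Finset.mem_of_mem_erase hj
      le_two_mul_levelWeight (hk j hj) (hF' i₀ hi₀ j hj hP) (hFP j hj)
  rw [Finset.sum_add_distrib, Finset.sum_const, Finset.card_erase_of_mem hi₀, smul_eq_mul,
    ← Finset.mul_sum, ← Finset.mul_sum] at hrest
  have : 4 * (3 * k i₀) ≤ (s.card - 1) * (3 * k i₀) := Nat.mul_le_mul_right _ (by omega)
  omega

end LayerCake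

lemma card_add_le_card_filter_fst_eq {M G : Type*} [Add M] [Add G] [DecidableEq M]
    [DecidableEq G] {S : Finset (M × G)} {x y : M} {U V : Finset G} (hU : {x} ×ˢ U ⊆ S)
    (hV : {y} ×ˢ V ⊆ S) : (U + V).card ≤ ((S + S).filter (·.1 = x + y)).card := by
  have hsub : {x + y} ×ˢ (U + V) ⊆ (S + S).filter (·.1 = x + y) := by
    intro p hp
    refine Finset.mem_filter.2 ⟨?_, Finset.mem_singleton.1 (Finset.mem_product.1 hp).1⟩
    rw [← Finset.singleton_add_singleton, ← Finset.product_add_product_comm] at hp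
    exact Finset.add_subset_add hU hV hp
  simpa using Finset.card_le_card hsub

theorem B1_in_coset_of_small_doubling_general {ι M G : Type*} [AddGroup M] [IsAddTorsionFree M]
    [DecidableEq M] [AddCommGroup G] [DecidableEq G] {s : Finset ι} (hs : 5 ≤ s.card) {a : ι → M}
    (ha : Set.InjOn a s) {B : ι → Finset G} (hBne : ∀ i ∈ s, (B i).Nonempty) {i₀ : ι}
    (hi₀ : i₀ ∈ s) (hord : ∀ i ∈ s, (B i).card ≤ (B i₀).card) {S : Finset (M × G)}
    (hS : S = s.biUnion fun i => {a i} ×ˢ B i) (hdbl : 2 * (S + S).card < 5 * S.card) :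
    IsDenseInCoset (B i₀) := by
  by_contra hB₀
  have hfibre : ∀ i ∈ s, {a i} ×ˢ B i ⊆ S := fun i hi =>
    hS ▸ Finset.subset_biUnion_of_mem (fun i => {a i} ×ˢ B i) hi
  have hF : ∀ i ∈ s, ∀ j ∈ s, (B i + B j).card ≤ ((S + S).filter (·.1 = a i + a j)).card :=
    fun i hi j hj => card_add_le_card_filter_fst_eq (hfibre i hi) (hfibre j hj)
  have hcard : S.card ≤ ∑ i ∈ s, (B i).card := by
    simpa [hS] using Finset.card_biUnion_le (s := s) (t := fun i => {a i} ×ˢ B i)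
  have hsum : ∑ c ∈ s.image a + s.image a, ((S + S).filter (·.1 = c)).card ≤ (S + S).card := by
    rw [Finset.sum_card_fiberwise_eq_card_filter]
    exact Finset.card_filter_le _ _
  have hcount := five_mul_sum_le_two_mul_sum hs hi₀ ha (k := fun i => (B i).card)
    (F := fun c => ((S + S).filter (·.1 = c)).card) (P := fun i => IsDenseInCoset (B i))
    (fun i hi j hj =>
      Finset.add_mem_add (Finset.mem_image_of_mem a hi) (Finset.mem_image_of_mem a hj))
    hord hB₀
    (fun i hi j hj => (Finset.card_le_card_add_right (hBne j hj)).trans (hF i hi j hj))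
    (fun i hi j hj hd => by
      have := card_add_lower_bound_of_not_isDenseInCoset hd (hBne i hi) (hBne j hj)
      have := hF i hi j hj
      omega)
    (fun j hj hd => (hd.two_mul_card_le_card_add hB₀ (hBne i₀ hi₀) (hord j hj)).trans
      (hF i₀ hi₀ j hj))
  omega

theorem B1_in_coset_of_small_doubling (s d : ℕ) (hs : 6 ≤ s) (hd : 0 < d)
    (a : ℕ → ℤ) (ha0 : a 0 = 0)
    (hinj : ∀ i < s, ∀ j < s, a i = a j → i = j)
    (hgcd : (Finset.range s).gcd a = 1)
    (B : ℕ → Finset (ZMod d)) (hBne : ∀ i < s, (B i).Nonempty) (h0B : (0 : ZMod d) ∈ B 0)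
    (hord : ∀ i < s, (B i).card ≤ (B 0).card)
    (Btil : Finset (ℤ × ZMod d))
    (hBtil : Btil = (Finset.range s).biUnion (fun i => {a i} ×ˢ B i))
    (hdbl : 2 * (Btil + Btil).card < 5 * Btil.card) :
    ∃ (H : AddSubgroup (ZMod d)) (x : ZMod d),
      2 * Nat.card H < 3 * (B 0).card ∧ ∀ z ∈ B 0, z - x ∈ H := by
  obtain ⟨H, x, -, hHx⟩ := B1_in_coset_of_small_doubling_general (s := .range s) (i₀ := 0)
    (by rw [Finset.card_range]; omega) (by simpa [Set.InjOn] using hinj) (by simpa using hBne)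
    (Finset.mem_range.2 (by omega)) (by simpa using hord) hBtil hdbl
  exact ⟨H, x, hHx⟩
end
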